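/- arXiv:2402.06279 — 4 statements merged into one kernel-verified Lean document; each statement's English description precedes it below -/
import Mathlib

section
/- Let A be a bounded self-adjoint operator on a Hilbert space H and B a bounded self-adjoint operator on a Hilbert space K. Then the spectrum of A ⊗ B equals {xy : x ∈ σ(A), y ∈ σ(B)}. -/
open scoped InnerProductSpace

/-!
The operators `A ⊗ 1` and `1 ⊗ B` commute and `A ⊗ B` is their product. The double
centralizer of this pair is a commutative Banach algebra in which spectra do not change, so its
characters give `σ(A ⊗ B) ⊆ σ(A ⊗ 1) σ(1 ⊗ B)`. Moreover `σ(A ⊗ 1) ⊆ σ(A)` and `σ(1 ⊗ B) ⊆ σ(B)`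
because `S ↦ S ⊗ 1` and `T ↦ 1 ⊗ T` are unital algebra homomorphisms.

Conversely, every spectral value of a normal operator is an approximate eigenvalue, and if `u n` and
`v n` are approximate eigenvectors of `A` and `B` for `x` and `y`, then `u n ⊗ v n` are approximate
eigenvectors of `A ⊗ B` for `x * y`.
-/

open Filter Topology
open scoped Pointwise TensorProduct

section CommutingElements

theorem isUnit_coe_centralizer_iff {R A : Type*} [CommSemiring R] [Semiring A] [Algebra R A]
    {s : Set A} {a : Subalgebra.centralizer R s} : IsUnit (a : A) ↔ IsUnit a := by
  refine ⟨?_, fun ha ↦ ha.map (Subalgebra.centralizer R s).val⟩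
  rintro ⟨u, hu⟩
  have hinv : (↑u⁻¹ : A) ∈ Subalgebra.centralizer R s := fun c hc ↦
    Commute.units_inv_right (show Commute c u from hu ▸ a.2 c hc)
  refine isUnit_iff_exists.mpr ⟨⟨_, hinv⟩, Subtype.ext ?_, Subtype.ext ?_⟩ <;> simp [← hu]

theorem spectrum_coe_centralizer {R A : Type*} [CommRing R] [Ring A] [Algebra R A]
    {s : Set A} (a : Subalgebra.centralizer R s) : spectrum R (a : A) = spectrum R a :=
  Set.ext fun x ↦ not_congr <|
    isUnit_coe_centralizer_iff (a := algebraMap R (Subalgebra.centralizer R s) x - a)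

theorem spectrum_mul_subset_of_commute {R : Type*} [NormedRing R] [NormedAlgebra ℂ R]
    [CompleteSpace R] {a b : R} (hab : Commute a b) :
    spectrum ℂ (a * b) ⊆ spectrum ℂ a * spectrum ℂ b := by
  let S : Subalgebra ℂ R := Subalgebra.centralizer ℂ (Set.centralizer {a, b})
  have hcomm : ∀ p q : S, p * q = q * p := fun p q ↦ Subtype.ext <|
    Set.centralizer_centralizer_comm_of_comm (S := {a, b})
      (by rintro x (rfl | rfl) y (rfl | rfl) <;> simp [hab.eq]) p p.2 q q.2
  let _ : NormedCommRing S := { (inferInstance : NormedRing S) with mul_comm := hcomm }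
  have : CompleteSpace S :=
    IsClosed.completeSpace_coe (hs := (Set.isClosed_centralizer _ : IsClosed (S : Set R)))
  let p : S := ⟨a, Set.subset_centralizer_centralizer (by simp)⟩
  let q : S := ⟨b, Set.subset_centralizer_centralizer (by simp)⟩
  have hp : spectrum ℂ a = spectrum ℂ p := spectrum_coe_centralizer p
  have hq : spectrum ℂ b = spectrum ℂ q := spectrum_coe_centralizer q
  have hpq : spectrum ℂ (a * b) = spectrum ℂ (p * q) := spectrum_coe_centralizer (p * q)
  rw [hp, hq, hpq]
  intro z hz
  obtain ⟨φ, rfl⟩ := WeakDual.CharacterSpace.mem_spectrum_iff_exists.mp hz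
  rw [map_mul]
  exact Set.mul_mem_mul (AlgHom.apply_mem_spectrum φ p) (AlgHom.apply_mem_spectrum φ q)

end CommutingElements

section ApproxPointSpectrum

variable {𝕜 E : Type*} [RCLike 𝕜]

/-- The approximate point spectrum of `T`: the scalars `x` for which there is a sequence of unit
vectors `u n` with `x • u n - T (u n) → 0`. -/
def approxPointSpectrum [NormedAddCommGroup E] [NormedSpace 𝕜 E] (T : E →L[𝕜] E) : Set 𝕜 :=
  {x | ∃ u : ℕ → E, (∀ n, ‖u n‖ = 1) ∧ Tendsto (fun n ↦ x • u n - T (u n)) atTop (𝓝 0)}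

theorem mem_approxPointSpectrum_iff_not_antilipschitz [NormedAddCommGroup E] [NormedSpace 𝕜 E]
    {T : E →L[𝕜] E} {x : 𝕜} :
    x ∈ approxPointSpectrum T ↔
      ¬∃ c, AntilipschitzWith c (algebraMap 𝕜 (E →L[𝕜] E) x - T) := by
  constructor
  · rintro ⟨u, hu, hlim⟩ ⟨c, hc⟩
    have hbound : ∀ n, 1 ≤ c * ‖x • u n - T (u n)‖ := fun n ↦ by
      simpa [hu n, Algebra.algebraMap_eq_smul_one] using
        ContinuousLinearMap.bound_of_antilipschitz _ hc (u n)
    have hlim' : Tendsto (fun n ↦ c * ‖x • u n - T (u n)‖) atTop (𝓝 0) := by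
      simpa using hlim.norm.const_mul (c : ℝ)
    exact zero_lt_one.not_ge (ge_of_tendsto' hlim' hbound)
  · intro h
    have hsmall : ∀ n : ℕ, ∃ u : E, ‖u‖ = 1 ∧ ‖x • u - T u‖ ≤ 1 / ((n : ℝ) + 1) := by
      intro n
      by_contra! hn
      refine h ⟨n + 1, antilipschitz_of_bound_of_norm_one (𝕜 := 𝕜) _ fun u hu ↦ ?_⟩
      have := ((div_lt_iff₀' (by positivity)).mp (hn u hu)).le
      simpa [Algebra.algebraMap_eq_smul_one] using this
    choose u hu hle using hsmall
    exact ⟨u, hu, squeeze_zero_norm hle tendsto_one_div_add_atTop_nhds_zero_nat⟩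

theorem approxPointSpectrum_subset_spectrum [NormedAddCommGroup E] [NormedSpace 𝕜 E]
    [CompleteSpace E] (T : E →L[𝕜] E) : approxPointSpectrum T ⊆ spectrum 𝕜 T := by
  intro x hx hunit
  rw [spectrum.mem_resolventSet_iff, ContinuousLinearMap.isUnit_iff_bijective,
    ContinuousLinearMap.bijective_iff_dense_range_and_antilipschitz] at hunit
  exact mem_approxPointSpectrum_iff_not_antilipschitz.mp hx hunit.2

variable [NormedAddCommGroup E] [InnerProductSpace 𝕜 E] [CompleteSpace E]

theorem isUnit_of_isStarNormal_of_antilipschitz {T : E →L[𝕜] E} (hT : IsStarNormal T)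
    {c : NNReal} (hc : AntilipschitzWith c T) : IsUnit T := by
  rw [ContinuousLinearMap.isUnit_iff_bijective,
    ContinuousLinearMap.bijective_iff_dense_range_and_antilipschitz]
  refine ⟨?_, c, hc⟩
  rw [Submodule.topologicalClosure_eq_top_iff, ContinuousLinearMap.IsStarNormal.orthogonal_range hT]
  exact LinearMap.ker_eq_bot.mpr hc.injective

theorem isStarNormal_algebraMap_sub {R A : Type*} [CommSemiring R] [StarRing R] [Ring A]
    [StarRing A] [Algebra R A] [StarModule R A] {a : A} (ha : IsStarNormal a) (r : R) :
    IsStarNormal (algebraMap R A r - a) := by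
  rw [isStarNormal_iff, star_sub, ← algebraMap_star_comm]
  exact (Algebra.commute_algebraMap_left _ _).sub_left
    ((Algebra.commute_algebraMap_right _ _).sub_right ha.star_comm_self)

theorem approxPointSpectrum_eq_spectrum {T : E →L[𝕜] E} (hT : IsStarNormal T) :
    approxPointSpectrum T = spectrum 𝕜 T := by
  refine (approxPointSpectrum_subset_spectrum T).antisymm fun x hx ↦ ?_
  rw [mem_approxPointSpectrum_iff_not_antilipschitz]
  rintro ⟨c, hc⟩
  exact hx (isUnit_of_isStarNormal_of_antilipschitz (isStarNormal_algebraMap_sub hT x) hc)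

end ApproxPointSpectrum

/-- `HK` is the Hilbert tensor product of `H` and `K` with elementary tensors `tmul h k`, up to
isomorphism: inner products of elementary tensors are the expected ones and their span is dense.
Completeness of `HK` is left to a separate instance argument. -/
structure IsHilbertTensor {𝕜 H K HK : Type*} [RCLike 𝕜]
    [NormedAddCommGroup H] [InnerProductSpace 𝕜 H]
    [NormedAddCommGroup K] [InnerProductSpace 𝕜 K]
    [NormedAddCommGroup HK] [InnerProductSpace 𝕜 HK]
    (tmul : H →ₗ[𝕜] K →ₗ[𝕜] HK) : Prop where
  inner_tmul : ∀ (h h' : H) (k k' : K),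
    ⟪tmul h k, tmul h' k'⟫_𝕜 = ⟪h, h'⟫_𝕜 * ⟪k, k'⟫_𝕜
  dense_span : Dense (Submodule.span 𝕜 {z : HK | ∃ h k, z = tmul h k} : Set HK)

namespace IsHilbertTensor

variable {𝕜 H K HK : Type*} [RCLike 𝕜]
  [NormedAddCommGroup H] [InnerProductSpace 𝕜 H]
  [NormedAddCommGroup K] [InnerProductSpace 𝕜 K]
  [NormedAddCommGroup HK] [InnerProductSpace 𝕜 HK]
  {tmul : H →ₗ[𝕜] K →ₗ[𝕜] HK}

theorem norm_tmul (ht : IsHilbertTensor tmul) (h : H) (k : K) : ‖tmul h k‖ = ‖h‖ * ‖k‖ := by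
  rw [← sq_eq_sq₀ (norm_nonneg _) (by positivity), mul_pow]
  have := ht.inner_tmul h h k k
  simp only [inner_self_eq_norm_sq_to_K] at this
  exact_mod_cast this

theorem clm_ext (ht : IsHilbertTensor tmul) {S T : HK →L[𝕜] HK}
    (hST : ∀ h k, S (tmul h k) = T (tmul h k)) : S = T := by
  refine ContinuousLinearMap.ext_on ht.dense_span ?_
  rintro _ ⟨h, k, rfl⟩
  exact hST h k

theorem inner_lift (ht : IsHilbertTensor tmul) (x y : H ⊗[𝕜] K) :
    ⟪TensorProduct.lift tmul x, TensorProduct.lift tmul y⟫_𝕜 = ⟪x, y⟫_𝕜 := by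
  induction x using TensorProduct.induction_on with
  | zero => simp
  | add x₁ x₂ h₁ h₂ => simp [inner_add_left, h₁, h₂]
  | tmul h k =>
    induction y using TensorProduct.induction_on with
    | zero => simp
    | add y₁ y₂ h₁ h₂ => simp only [map_add, inner_add_right, h₁, h₂]
    | tmul h' k' => simp [ht.inner_tmul]

/-- The isometric embedding of the algebraic tensor product `H ⊗ K` into `HK`. -/
noncomputable def embed (ht : IsHilbertTensor tmul) : H ⊗[𝕜] K →ₗᵢ[𝕜] HK :=
  (TensorProduct.lift tmul).isometryOfInner ht.inner_lift

@[simp]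
theorem embed_tmul (ht : IsHilbertTensor tmul) (h : H) (k : K) :
    ht.embed (h ⊗ₜ k) = tmul h k := by
  simp [embed]

theorem denseRange_embed (ht : IsHilbertTensor tmul) : DenseRange ht.embed := by
  have hspan : Submodule.span 𝕜 {z | ∃ h k, z = tmul h k} ≤ ht.embed.toLinearMap.range := by
    rw [Submodule.span_le]
    rintro _ ⟨h, k, rfl⟩
    exact ⟨h ⊗ₜ k, ht.embed_tmul h k⟩
  exact ht.dense_span.mono hspan

theorem mul_mem_approxPointSpectrum (ht : IsHilbertTensor tmul) {A : H →L[𝕜] H} {B : K →L[𝕜] K}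
    {C : HK →L[𝕜] HK} (hC : ∀ h k, C (tmul h k) = tmul (A h) (B k)) {x y : 𝕜}
    (hx : x ∈ approxPointSpectrum A) (hy : y ∈ approxPointSpectrum B) :
    x * y ∈ approxPointSpectrum C := by
  obtain ⟨u, hu, hu_lim⟩ := hx
  obtain ⟨v, hv, hv_lim⟩ := hy
  refine ⟨fun n ↦ tmul (u n) (v n), fun n ↦ by simp [ht.norm_tmul, hu, hv], ?_⟩
  have hsplit : ∀ n, (x * y) • tmul (u n) (v n) - C (tmul (u n) (v n)) =
      tmul (x • u n) (y • v n - B (v n)) + tmul (x • u n - A (u n)) (B (v n)) := fun n ↦ by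
    simp [hC, mul_smul, smul_sub]
  have hbound : ∀ n, ‖(x * y) • tmul (u n) (v n) - C (tmul (u n) (v n))‖ ≤
      ‖x‖ * ‖y • v n - B (v n)‖ + ‖x • u n - A (u n)‖ * ‖B‖ := fun n ↦ by
    have hBv : ‖B (v n)‖ ≤ ‖B‖ := B.unit_le_opNorm _ (hv n).le
    rw [hsplit]
    grw [norm_add_le, ht.norm_tmul, ht.norm_tmul, hBv, norm_smul, hu, mul_one]
  refine squeeze_zero_norm hbound ?_
  simpa using (hv_lim.norm.const_mul ‖x‖).add (hu_lim.norm.mul_const ‖B‖)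

variable [CompleteSpace HK]

/-- The operator `S ⊗ T` on the Hilbert tensor product, the continuous extension of the operator
`S ⊗ T` on the algebraic tensor product. -/
noncomputable def map (ht : IsHilbertTensor tmul) (S : H →L[𝕜] H) (T : K →L[𝕜] K) :
    HK →L[𝕜] HK :=
  (ht.embed.toContinuousLinearMap ∘L TensorProduct.mapL S T).extend ht.embed.toContinuousLinearMap

@[simp]
theorem map_tmul (ht : IsHilbertTensor tmul) (S : H →L[𝕜] H) (T : K →L[𝕜] K) (h : H) (k : K) :
    ht.map S T (tmul h k) = tmul (S h) (T k) := by
  have hd : DenseRange ht.embed.toContinuousLinearMap := ht.denseRange_embed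
  have hu : IsUniformInducing ht.embed.toContinuousLinearMap := ht.embed.isometry.isUniformInducing
  calc ht.map S T (tmul h k) = ht.map S T (ht.embed.toContinuousLinearMap (h ⊗ₜ k)) := by
        rw [LinearIsometry.coe_toContinuousLinearMap, embed_tmul]
    _ = ht.embed (TensorProduct.mapL S T (h ⊗ₜ k)) :=
        ContinuousLinearMap.extend_eq _ hd hu _
    _ = tmul (S h) (T k) := by simp

theorem map_one_one (ht : IsHilbertTensor tmul) : ht.map 1 1 = 1 :=
  ht.clm_ext fun h k ↦ by simp

theorem map_mul_map (ht : IsHilbertTensor tmul) (S S' : H →L[𝕜] H) (T T' : K →L[𝕜] K) :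
    ht.map S T * ht.map S' T' = ht.map (S * S') (T * T') :=
  ht.clm_ext fun h k ↦ by simp

/-- The unital algebra homomorphism `S ↦ S ⊗ 1`. -/
noncomputable def leftAmpliation (ht : IsHilbertTensor tmul) :
    (H →L[𝕜] H) →ₐ[𝕜] (HK →L[𝕜] HK) :=
  .ofLinearMap
    { toFun := fun S ↦ ht.map S 1
      map_add' := fun S S' ↦ ht.clm_ext fun h k ↦ by simp
      map_smul' := fun c S ↦ ht.clm_ext fun h k ↦ by simp }
    ht.map_one_one
    (fun S S' ↦ by simp [map_mul_map])

/-- The unital algebra homomorphism `T ↦ 1 ⊗ T`. -/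
noncomputable def rightAmpliation (ht : IsHilbertTensor tmul) :
    (K →L[𝕜] K) →ₐ[𝕜] (HK →L[𝕜] HK) :=
  .ofLinearMap
    { toFun := fun T ↦ ht.map 1 T
      map_add' := fun T T' ↦ ht.clm_ext fun h k ↦ by simp
      map_smul' := fun c T ↦ ht.clm_ext fun h k ↦ by simp }
    ht.map_one_one
    (fun T T' ↦ by simp [map_mul_map])

theorem spectrum_map_one_subset (ht : IsHilbertTensor tmul) (S : H →L[𝕜] H) :
    spectrum 𝕜 (ht.map S 1) ⊆ spectrum 𝕜 S :=
  AlgHom.spectrum_apply_subset ht.leftAmpliation S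

theorem spectrum_one_map_subset (ht : IsHilbertTensor tmul) (T : K →L[𝕜] K) :
    spectrum 𝕜 (ht.map 1 T) ⊆ spectrum 𝕜 T :=
  AlgHom.spectrum_apply_subset ht.rightAmpliation T

end IsHilbertTensor

theorem spectrum_tensor_subset_mul {H K HK : Type*}
    [NormedAddCommGroup H] [InnerProductSpace ℂ H]
    [NormedAddCommGroup K] [InnerProductSpace ℂ K]
    [NormedAddCommGroup HK] [InnerProductSpace ℂ HK] [CompleteSpace HK]
    {tmul : H →ₗ[ℂ] K →ₗ[ℂ] HK} (ht : IsHilbertTensor tmul)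
    {A : H →L[ℂ] H} {B : K →L[ℂ] K} {C : HK →L[ℂ] HK}
    (hC : ∀ h k, C (tmul h k) = tmul (A h) (B k)) :
    spectrum ℂ C ⊆ spectrum ℂ A * spectrum ℂ B := by
  have hfactor : C = ht.map A 1 * ht.map 1 B := ht.clm_ext fun h k ↦ by simp [hC]
  have hcomm : Commute (ht.map A 1) (ht.map 1 B) := by
    simp only [Commute, SemiconjBy, ht.map_mul_map, one_mul, mul_one]
  rw [hfactor]
  exact (spectrum_mul_subset_of_commute hcomm).trans <|
    Set.mul_subset_mul (ht.spectrum_map_one_subset A) (ht.spectrum_one_map_subset B)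

theorem spectrum_tensor_prod_general {H K HK : Type*}
    [NormedAddCommGroup H] [InnerProductSpace ℂ H] [CompleteSpace H]
    [NormedAddCommGroup K] [InnerProductSpace ℂ K] [CompleteSpace K]
    [NormedAddCommGroup HK] [InnerProductSpace ℂ HK] [CompleteSpace HK]
    {tmul : H →ₗ[ℂ] K →ₗ[ℂ] HK} (ht : IsHilbertTensor tmul)
    {A : H →L[ℂ] H} (hA : IsStarNormal A) {B : K →L[ℂ] K} (hB : IsStarNormal B)
    {C : HK →L[ℂ] HK} (hC : ∀ h k, C (tmul h k) = tmul (A h) (B k)) :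
    spectrum ℂ C = spectrum ℂ A * spectrum ℂ B := by
  refine (spectrum_tensor_subset_mul ht hC).antisymm ?_
  rw [← approxPointSpectrum_eq_spectrum hA, ← approxPointSpectrum_eq_spectrum hB,
    Set.mul_subset_iff]
  exact fun x hx y hy ↦
    approxPointSpectrum_subset_spectrum C (ht.mul_mem_approxPointSpectrum hC hx hy)

/-- The spectrum of `A ⊗ B` on the Hilbert tensor product `H ⊗ K`
(presented as a Hilbert space `HK` with an elementary-tensor map `tmul` having
dense span and the product inner product) is the product set of the spectra. -/
theorem spectrum_tensor_prod
    {H K HK : Type*}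
    [NormedAddCommGroup H] [InnerProductSpace ℂ H] [CompleteSpace H] [Nontrivial H]
    [NormedAddCommGroup K] [InnerProductSpace ℂ K] [CompleteSpace K] [Nontrivial K]
    [NormedAddCommGroup HK] [InnerProductSpace ℂ HK] [CompleteSpace HK]
    (tmul : H →ₗ[ℂ] K →ₗ[ℂ] HK)
    (hinner : ∀ (h h' : H) (k k' : K),
      ⟪tmul h k, tmul h' k'⟫_ℂ = ⟪h, h'⟫_ℂ * ⟪k, k'⟫_ℂ)
    (hdense : Dense (Submodule.span ℂ {z : HK | ∃ h k, z = tmul h k} : Set HK))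
    (A : H →L[ℂ] H) (hA : IsSelfAdjoint A)
    (B : K →L[ℂ] K) (hB : IsSelfAdjoint B)
    (C : HK →L[ℂ] HK)
    (hC : ∀ (h : H) (k : K), C (tmul h k) = tmul (A h) (B k)) :
    spectrum ℂ C =
      {z : ℂ | ∃ x ∈ spectrum ℂ A, ∃ y ∈ spectrum ℂ B, z = x * y} := by
  rw [spectrum_tensor_prod_general ⟨hinner, hdense⟩ hA.isStarNormal hB.isStarNormal hC]
  simp only [Set.ext_iff, Set.mem_mul, Set.mem_ofPred_eq, eq_comm, implies_true]
end

section
/- Let n ≥ 5 and N ≥ 1. The spectrum of the adjacency operator of the graph L + NK_n (the graph sum of the bi-infinite line L with N copies of K_n) is the disjoint union of the N+1 intervals [−(N−j) + j(n−1) − 2, −(N−j) + j(n−1) + 2] for j = 0, 1, …, N, and these intervals are pairwise disjoint. -/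
/-!
Write `A = L + B`, where `L = U + U*` is the adjacency operator of the line, `U` being the unitary
translation, and `B` acts on the fibres by the adjacency matrix of the Hamming graph.

* `L` and `B` commute and `B` is annihilated by a polynomial `p`, so `z - L - B` divides `p(z - L)`,
  and hence `σ(A) ⊆ σ(L) + σ(B) ⊆ [-2, 2] + σ(B)`.
* Conversely, suppose `μ ∈ σ(B)`, `|t| ≤ 2` and `t + μ ∉ σ(A)`. Applying a left eigenvector of `B`
  for `μ` to solutions of `(t + μ - A) ξ = δ` gives a decaying Green's function of `t - L` on `ℤ`.
  There is none: away from the source it solves `f (m + 2) = t f (m + 1) - f m`, which conserves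
  `|f m|² + |f (m + 1)|² - t ⟨f m, f (m + 1)⟩ ≥ (|f m| - |f (m + 1)|)²`, so `|f|` is constant.
* The Hamming matrix on words of length `N` in `n` letters is `∑ i, P i - N`, where `P i` sums over
  the `i`-th letter. The `P i` commute and `P i ^ 2 = n • P i`, so its eigenvalues are `j n - N`
  for `0 ≤ j ≤ N`.
-/

open scoped Pointwise InnerProductSpace
open Polynomial Filter Topology Function

section CommutingSum

variable {K R : Type*} [Field K] [Ring R] [Algebra K R] {a b : R}

theorem exists_commute_sub_mul_eq_aeval_sub_aeval (h : Commute a b) (p : K[X]) :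
    ∃ c, Commute (a - b) c ∧ (a - b) * c = aeval a p - aeval b p := by
  induction p using Polynomial.induction_on' with
  | add p q hp hq =>
    obtain ⟨c, hc, hcp⟩ := hp
    obtain ⟨d, hd, hdq⟩ := hq
    exact ⟨c + d, hc.add_right hd, by rw [mul_add, hcp, hdq, map_add, map_add]; abel⟩
  | monomial n r =>
    have hab (i j : ℕ) : Commute (a - b) (a ^ i * b ^ j) :=
      (((Commute.refl a).sub_left h.symm).pow_right i).mul_right
        ((h.sub_left (Commute.refl b)).pow_right j)
    refine ⟨r • ∑ i ∈ Finset.range n, a ^ i * b ^ (n - 1 - i),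
      (Commute.sum_right _ _ _ fun i _ => hab i _).smul_right r, ?_⟩
    rw [mul_smul_comm, h.mul_geom_sum₂, aeval_monomial, aeval_monomial, ← mul_sub,
      Algebra.smul_def]

theorem isUnit_sub_of_isUnit_aeval (h : Commute a b) {p : K[X]} (hb : aeval b p = 0)
    (ha : IsUnit (aeval a p)) : IsUnit (a - b) := by
  obtain ⟨c, hc, hmul⟩ := exists_commute_sub_mul_eq_aeval_sub_aeval h p
  rw [hb, sub_zero] at hmul
  exact (hc.isUnit_mul_iff.1 (hmul ▸ ha)).1

theorem spectrum_add_subset_of_aeval_eq_zero (h : Commute a b) {p : K[X]} (hp : p.Splits)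
    (hp0 : p ≠ 0) (hb : aeval b p = 0) : spectrum K (a + b) ⊆ spectrum K a + {k | p.IsRoot k} := by
  intro z hz
  have hnot : ¬IsUnit (aeval (algebraMap K R z - a) p) := fun hu =>
    hz <| by
      rw [spectrum.mem_resolventSet_iff, ← sub_sub]
      exact isUnit_sub_of_isUnit_aeval ((Algebra.commute_algebraMap_left z b).sub_left h) hb hu
  have hlead : IsUnit (algebraMap K R p.leadingCoeff) :=
    (IsUnit.mk0 _ (leadingCoeff_ne_zero.2 hp0)).map _
  obtain ⟨k, hk, hroot⟩ := spectrum.exists_mem_of_not_isUnit_aeval_prod (p := p)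
    (a := algebraMap K R z - a) fun hu => hnot <| by
      rw [hp.eq_prod_roots, map_mul, aeval_C]
      exact hlead.mul hu
  rw [← spectrum.singleton_sub_eq, Set.singleton_sub] at hk
  obtain ⟨l, hl, rfl⟩ := hk
  exact ⟨l, hl, z - l, hroot, add_sub_cancel l z⟩

theorem spectrum_sum_subset_of_mul_self_eq_smul {ι : Type*} {P : ι → R} {c : K}
    (hcomm : Pairwise (Commute on P)) (hsq : ∀ i, P i * P i = c • P i) (s : Finset ι) :
    spectrum K (∑ i ∈ s, P i) ⊆ (fun j : ℕ => j * c) '' Set.Iic s.card := by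
  classical
  induction s using Finset.induction_on with
  | empty =>
    nontriviality R
    simp
  | insert i s hi ih =>
    have hroots : aeval (P i) (X * (X - C c)) = 0 := by
      simp [mul_sub, hsq, ← Algebra.smul_def]
    have hcommute : Commute (∑ k ∈ s, P k) (P i) :=
      Commute.sum_left _ _ _ fun k hk => hcomm (ne_of_mem_of_not_mem hk hi)
    rw [Finset.sum_insert hi, add_comm, Finset.card_insert_of_notMem hi]
    refine (spectrum_add_subset_of_aeval_eq_zero hcommute (.mul .X (.X_sub_C c))
      (mul_ne_zero X_ne_zero (X_sub_C_ne_zero c)) hroots).trans ?_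
    rintro _ ⟨l, hl, k, hk, rfl⟩
    obtain ⟨j, hj, rfl⟩ := ih hl
    obtain rfl | rfl : k = 0 ∨ k = c := by simpa [sub_eq_zero] using hk
    · exact ⟨j, Nat.le_succ_of_le hj, (add_zero _).symm⟩
    · exact ⟨j + 1, Nat.succ_le_succ hj, by push_cast; ring⟩

end CommutingSum

theorem spectrum_add_star_subset {R : Type*} [CStarAlgebra R] (a : R) :
    spectrum ℂ (a + star a) ⊆ Complex.ofReal '' Set.Icc (-(2 * ‖a‖)) (2 * ‖a‖) := by
  nontriviality R
  intro z hz
  refine ⟨z.re, abs_le.1 ?_, ((IsSelfAdjoint.add_star_self a).mem_spectrum_eq_re hz).symm⟩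
  calc |z.re| ≤ ‖z‖ := Complex.abs_re_le_norm z
    _ ≤ ‖a + star a‖ := spectrum.norm_le_norm_of_mem hz
    _ ≤ ‖a‖ + ‖star a‖ := norm_add_le _ _
    _ = 2 * ‖a‖ := by rw [norm_star, two_mul]

theorem exists_dual_comp_eq_smul {K V : Type*} [Field K] [AddCommGroup V] [Module K V]
    [FiniteDimensional K V] {B : Module.End K V} {μ : K} (hμ : μ ∈ spectrum K B) :
    ∃ φ : Module.Dual K V, φ ≠ 0 ∧ φ ∘ₗ B = μ • φ := by
  have hrange : (algebraMap K (Module.End K V) μ - B).range < ⊤ :=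
    lt_top_iff_ne_top.2 fun h => hμ ((LinearMap.isUnit_iff_range_eq_top _).2 h)
  obtain ⟨φ, hφ, hker⟩ := Submodule.exists_le_ker_of_lt_top _ hrange
  refine ⟨φ, hφ, LinearMap.ext fun v => ?_⟩
  have hv : φ (μ • v - B v) = 0 := hker ⟨v, rfl⟩
  rw [map_sub, map_smul, sub_eq_zero] at hv
  exact hv.symm

theorem map_aeval_smul {K R R' V V' : Type*} [CommSemiring K] [Semiring R] [Algebra K R]
    [Semiring R'] [Algebra K R'] [AddCommMonoid V] [Module K V] [Module R V] [IsScalarTower K R V]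
    [AddCommMonoid V'] [Module K V'] [Module R' V'] [IsScalarTower K R' V'] {f : V →ₗ[K] V'} {a : R}
    {b : R'} (h : ∀ v, f (a • v) = b • f v) (p : K[X]) (v : V) :
    f (aeval a p • v) = aeval b p • f v := by
  have hpow (n : ℕ) : f (a ^ n • v) = b ^ n • f v := by
    induction n with
    | zero => simp
    | succ n ih => rw [pow_succ', pow_succ', mul_smul, mul_smul, h, ih]
  induction p using Polynomial.induction_on' with
  | add p q hp hq => rw [map_add, map_add, add_smul, add_smul, map_add, hp, hq]
  | monomial n r =>
    rw [aeval_monomial, aeval_monomial, mul_smul, mul_smul, algebraMap_smul, algebraMap_smul,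
      map_smul, hpow]

section Recurrence

variable {E : Type*} [NormedAddCommGroup E] [InnerProductSpace ℝ E] {t : ℝ}

/-- The energy of two consecutive terms of a solution of `f (m + 2) = t • f (m + 1) - f m`, which
is conserved along the solution. -/
def recurrenceEnergy (t : ℝ) (x y : E) : ℝ := ‖x‖ ^ 2 + ‖y‖ ^ 2 - t * ⟪x, y⟫_ℝ

theorem recurrenceEnergy_step (t : ℝ) (x y : E) :
    recurrenceEnergy t y (t • y - x) = recurrenceEnergy t x y := by
  simp only [recurrenceEnergy, norm_sub_sq_real, norm_smul, inner_sub_right, real_inner_smul_left,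
    real_inner_smul_right, real_inner_self_eq_norm_sq, mul_pow, Real.norm_eq_abs, sq_abs,
    real_inner_comm x y]
  ring

theorem sq_norm_sub_norm_le_recurrenceEnergy (ht : |t| ≤ 2) (x y : E) :
    (‖x‖ - ‖y‖) ^ 2 ≤ recurrenceEnergy t x y := by
  have hinner : t * ⟪x, y⟫_ℝ ≤ 2 * (‖x‖ * ‖y‖) :=
    calc t * ⟪x, y⟫_ℝ ≤ |t| * |⟪x, y⟫_ℝ| := (le_abs_self _).trans (abs_mul _ _).le
      _ ≤ 2 * (‖x‖ * ‖y‖) := by gcongr; exact abs_real_inner_le_norm x y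
  rw [recurrenceEnergy]
  linarith [sub_sq ‖x‖ ‖y‖]

theorem eq_zero_of_recurrence_of_tendsto_zero {f : ℕ → E} (ht : |t| ≤ 2)
    (hf : ∀ m, f (m + 2) = t • f (m + 1) - f m) (hlim : Tendsto f atTop (𝓝 0)) (m : ℕ) :
    f m = 0 := by
  have hlim_succ : Tendsto (fun m => f (m + 1)) atTop (𝓝 0) := (tendsto_add_atTop_iff_nat 1).2 hlim
  have hconst (m : ℕ) : recurrenceEnergy t (f m) (f (m + 1)) = recurrenceEnergy t (f 0) (f 1) := by
    induction m with
    | zero => rfl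
    | succ m ih => rw [← ih, hf, recurrenceEnergy_step]
  have henergy : recurrenceEnergy t (f 0) (f 1) = 0 := by
    have := ((hlim.norm.pow 2).add (hlim_succ.norm.pow 2)).sub ((hlim.inner hlim_succ).const_mul t)
    simpa [← recurrenceEnergy.eq_1, hconst, tendsto_const_nhds_iff] using this
  have hnorm_succ (m : ℕ) : ‖f (m + 1)‖ = ‖f m‖ := by
    have := sq_norm_sub_norm_le_recurrenceEnergy ht (f m) (f (m + 1))
    rw [hconst, henergy] at this
    exact (sub_eq_zero.1 (pow_eq_zero_iff two_ne_zero |>.1 (this.antisymm (sq_nonneg _)))).symm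
  have hnorm (k : ℕ) : ‖f (m + k)‖ = ‖f m‖ := by
    induction k with
    | zero => rfl
    | succ k ih => rw [← add_assoc, hnorm_succ, ih]
  have hlim_norm : Tendsto (fun k => ‖f (m + k)‖) atTop (𝓝 0) := by
    simpa [add_comm m] using ((tendsto_add_atTop_iff_nat m).2 hlim).norm
  simp only [hnorm] at hlim_norm
  exact norm_eq_zero.1 (tendsto_nhds_unique tendsto_const_nhds hlim_norm)

theorem eq_zero_of_greenFunction_of_tendsto_zero {g : ℤ → E} {w : E} (ht : |t| ≤ 2)
    (hg : ∀ m, t • g m - g (m - 1) - g (m + 1) = if m = 0 then w else 0)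
    (hlim : Tendsto g cofinite (𝓝 0)) : w = 0 := by
  have hforward (m : ℤ) (hm : m ≠ 0) : g (m + 1) = t • g m - g (m - 1) :=
    (sub_eq_zero.1 ((hg m).trans (if_neg hm))).symm
  have hbackward (m : ℤ) (hm : m ≠ 0) : g (m - 1) = t • g m - g (m + 1) := by
    rw [hforward m hm, sub_sub_cancel]
  have hlim_comp {e : ℕ → ℤ} (he : e.Injective) : Tendsto (g ∘ e) atTop (𝓝 0) :=
    hlim.comp (Nat.cofinite_eq_atTop ▸ he.tendsto_cofinite)
  have hright := eq_zero_of_recurrence_of_tendsto_zero (f := fun m : ℕ => g m) ht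
    (fun m => by simpa [add_assoc] using hforward (m + 1) (by omega)) (hlim_comp Nat.cast_injective)
  have hleft := eq_zero_of_recurrence_of_tendsto_zero (f := fun m : ℕ => g (-m)) ht
    (fun m => by
      convert hbackward (-(m + 1)) (by omega) using 3 <;> lia)
    (hlim_comp (neg_injective.comp Nat.cast_injective))
  have h0 : g 0 = 0 := by simpa using hright 0
  have h1 : g 1 = 0 := by simpa using hright 1
  have h2 : g (-1) = 0 := by simpa using hleft 1
  simpa [h0, h1, h2] using (hg 0).symm

end Recurrence

section Lp

open scoped ENNReal

variable {X Y E : Type*} [NormedAddCommGroup E] {p : ℝ≥0∞}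

theorem memℓp_comp_equiv (e : X ≃ Y) {f : Y → E} (hf : Memℓp f p) : Memℓp (f ∘ e) p := by
  obtain rfl | rfl | hp := p.trichotomy
  · exact memℓp_zero ((memℓp_zero_iff.1 hf).preimage e.injective.injOn)
  · exact memℓp_infty (by simpa [← Set.range_comp, Function.comp_def] using
      (memℓp_infty_iff.1 hf).mono (Set.range_comp_subset_range e _))
  · exact memℓp_gen (e.summable_iff.2 (hf.summable hp))

theorem norm_eq_of_coe_eq_comp_equiv [Fact (1 ≤ p)] (e : X ≃ Y) {ξ : lp (fun _ : X => E) p}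
    {η : lp (fun _ : Y => E) p} (h : ⇑ξ = η ∘ e) : ‖ξ‖ = ‖η‖ := by
  obtain rfl | rfl | hp := p.trichotomy
  · exact absurd (Fact.out : (1 : ℝ≥0∞) ≤ 0) (by simp)
  · rw [lp.norm_eq_ciSup, lp.norm_eq_ciSup, h]
    exact e.iSup_comp (g := fun y => ‖η y‖)
  · rw [lp.norm_eq_tsum_rpow hp, lp.norm_eq_tsum_rpow hp, h]
    exact congrArg (· ^ _) (e.tsum_eq fun y => ‖η y‖ ^ p.toReal)

/-- Reindexing `ℓᵖ` along a bijection `e` of the index types, by precomposition with `e`. -/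
def lpReindex (𝕜 E : Type*) [NormedField 𝕜] [NormedAddCommGroup E] [NormedSpace 𝕜 E] (p : ℝ≥0∞)
    [Fact (1 ≤ p)] (e : X ≃ Y) : lp (fun _ : Y => E) p ≃ₗᵢ[𝕜] lp (fun _ : X => E) p where
  toFun η := ⟨η ∘ e, memℓp_comp_equiv e (lp.memℓp η)⟩
  invFun ξ := ⟨ξ ∘ e.symm, memℓp_comp_equiv e.symm (lp.memℓp ξ)⟩
  map_add' _ _ := rfl
  map_smul' _ _ := rfl
  left_inv η := by ext y; exact congrArg η (e.apply_symm_apply y)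
  right_inv ξ := by ext x; exact congrArg ξ (e.symm_apply_apply x)
  norm_map' _ := norm_eq_of_coe_eq_comp_equiv e rfl

theorem tendsto_lp_cofinite_zero (hp : 0 < p.toReal) (ξ : lp (fun _ : X => E) p) :
    Tendsto ξ cofinite (𝓝 0) := by
  have := ((lp.memℓp ξ).summable hp).tendsto_cofinite_zero.rpow_const (p := p.toReal⁻¹)
    (.inr (inv_nonneg.2 hp.le))
  simp only [Real.rpow_rpow_inv (norm_nonneg _) hp.ne', Real.zero_rpow (inv_ne_zero hp.ne')] at this
  exact tendsto_zero_iff_norm_tendsto_zero.2 this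

end Lp

section SumLetter

variable {K ι α : Type*} [DecidableEq ι] [Fintype α]

/-- The operator on functions of words that replaces `f` by its sums over the `i`-th letter. -/
def sumLetter (K : Type*) [CommSemiring K] (i : ι) : Module.End K ((ι → α) → K) where
  toFun f x := ∑ a, f (update x i a)
  map_add' f g := by ext x; simp [Finset.sum_add_distrib]
  map_smul' c f := by ext x; simp [Finset.mul_sum]

theorem sumLetter_apply [CommSemiring K] (i : ι) (f : (ι → α) → K) (x : ι → α) :
    sumLetter K i f x = ∑ a, f (update x i a) := rfl

theorem commute_sumLetter [CommSemiring K] {i k : ι} (h : i ≠ k) :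
    Commute (sumLetter (α := α) K i) (sumLetter K k) := by
  refine LinearMap.ext fun f => funext fun x => ?_
  simp only [Module.End.mul_apply, sumLetter_apply, update_comm h]
  exact Finset.sum_comm

theorem sumLetter_mul_self [CommSemiring K] (i : ι) :
    sumLetter (α := α) K i * sumLetter K i = (Fintype.card α : K) • sumLetter K i := by
  refine LinearMap.ext fun f => funext fun x => ?_
  simp [Module.End.mul_apply, sumLetter_apply]

theorem sumLetter_prod [CommSemiring K] {u : α → K} (hu : ∑ a, u a = 0) (s : Finset ι) (i : ι) :
    sumLetter K i (fun x => ∏ k ∈ s, u (x k))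
      = (if i ∈ s then 0 else Fintype.card α : K) • fun x => ∏ k ∈ s, u (x k) := by
  ext x
  rw [sumLetter_apply, Pi.smul_apply, smul_eq_mul]
  split_ifs with hi
  · simp only [← Finset.mul_prod_erase s _ hi, update_self]
    have hrest (a : α) : ∏ k ∈ s.erase i, u (update x i a k) = ∏ k ∈ s.erase i, u (x k) :=
      Finset.prod_congr rfl fun k hk => by rw [update_of_ne (Finset.ne_of_mem_erase hk)]
    simp [hrest, ← Finset.sum_mul, hu]
  · have hfix (a : α) : ∏ k ∈ s, u (update x i a k) = ∏ k ∈ s, u (x k) :=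
      Finset.prod_congr rfl fun k hk => by rw [update_of_ne (ne_of_mem_of_not_mem hk hi)]
    simp [hfix]

variable [Fintype ι]

theorem exists_eigenvector_sum_sumLetter [Field K] [Nontrivial α] (s : Finset ι) :
    ∃ f : (ι → α) → K, f ≠ 0 ∧ (∑ i, sumLetter K i) f = (s.card * Fintype.card α : K) • f := by
  classical
  obtain ⟨a, b, hab⟩ := exists_pair_ne α
  let u : α → K := Pi.single a 1 - Pi.single b 1
  have hu : ∑ c, u c = 0 := by simp [u]
  refine ⟨fun x => ∏ k ∈ sᶜ, u (x k), fun h => ?_, ?_⟩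
  · simpa [u, hab] using congrFun h fun _ => a
  · rw [LinearMap.sum_apply, Finset.sum_congr rfl fun i _ => sumLetter_prod hu sᶜ i,
      ← Finset.sum_smul]
    simp

theorem spectrum_sum_sumLetter [Field K] [Nontrivial α] :
    spectrum K (∑ i : ι, sumLetter (α := α) K i)
      = (fun j : ℕ => (j * Fintype.card α : K)) '' Set.Iic (Fintype.card ι) := by
  refine (spectrum_sum_subset_of_mul_self_eq_smul (fun _ _ => commute_sumLetter) sumLetter_mul_self
    Finset.univ).antisymm ?_
  rintro _ ⟨j, hj, rfl⟩
  obtain ⟨s, -, rfl⟩ := Finset.exists_subset_card_eq (s := (Finset.univ : Finset ι)) hj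
  obtain ⟨f, hf, heigen⟩ := exists_eigenvector_sum_sumLetter (α := α) (K := K) s
  exact (Module.End.hasEigenvalue_of_hasEigenvector
    ⟨Module.End.mem_eigenspace_iff.2 heigen, hf⟩).mem_spectrum

end SumLetter

section HammingGraph

variable {ι α : Type*} [DecidableEq ι]

theorem eq_and_eq_of_update_eq_update {x : ι → α} {i k : ι} {a b : α} (ha : a ≠ x i)
    (h : update x i a = update x k b) : i = k ∧ a = b := by
  have hi : a = update x k b i := by rw [← h, update_self]
  obtain rfl | hik := eq_or_ne i k
  · exact ⟨rfl, hi.trans (update_self ..)⟩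
  · exact absurd (hi.trans (update_of_ne hik ..)) ha

variable [Fintype ι] [DecidableEq α]

/-- The Hamming graph on the words `ι → α`, i.e. the graph sum of `ι` copies of the complete graph
on `α`: two words are adjacent when they differ in exactly one position. -/
def hammingGraph (ι α : Type*) [Fintype ι] [DecidableEq α] : SimpleGraph (ι → α) where
  Adj x y := hammingDist x y = 1
  symm := ⟨fun x y h => hammingDist_comm x y ▸ h⟩
  loopless := ⟨fun x h => by simp at h⟩

instance : DecidableRel (hammingGraph ι α).Adj := fun x y =>
  inferInstanceAs (Decidable (hammingDist x y = 1))

theorem hammingGraph_adj_iff_exists_update {x y : ι → α} :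
    (hammingGraph ι α).Adj x y ↔ ∃ i a, a ≠ x i ∧ update x i a = y := by
  constructor
  · intro h
    obtain ⟨i, hi⟩ := Finset.card_eq_one.1 h
    have hne (k : ι) : x k ≠ y k ↔ k = i := by simpa using Finset.ext_iff.1 hi k
    refine ⟨i, y i, ((hne i).2 rfl).symm, update_eq_iff.2 ⟨rfl, fun k hk => ?_⟩⟩
    exact not_not.1 (mt (hne k).1 hk)
  · rintro ⟨i, a, ha, rfl⟩
    refine Finset.card_eq_one.2 ⟨i, Finset.ext fun k => ?_⟩
    obtain rfl | hk := eq_or_ne k i <;> simp [*, ha.symm]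

variable [Fintype α]

theorem sum_neighborFinset_hammingGraph {M : Type*} [AddCommMonoid M] (f : (ι → α) → M)
    (x : ι → α) :
    ∑ y ∈ (hammingGraph ι α).neighborFinset x, f y
      = ∑ i, ∑ a ∈ Finset.univ.erase (x i), f (update x i a) := by
  rw [Finset.sum_sigma']
  refine (Finset.sum_bij (fun p _ => update x p.1 p.2) ?_ ?_ ?_ fun _ _ => rfl).symm
  · rintro ⟨i, a⟩ ha
    simpa using hammingGraph_adj_iff_exists_update.2 ⟨i, a, by simpa using ha, rfl⟩
  · rintro ⟨i, a⟩ ha ⟨k, b⟩ - h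
    obtain ⟨rfl, rfl⟩ := eq_and_eq_of_update_eq_update (by simpa using ha) h
    rfl
  · intro y hy
    obtain ⟨i, a, ha, rfl⟩ := hammingGraph_adj_iff_exists_update.1 (by simpa using hy)
    exact ⟨⟨i, a⟩, by simpa using ha, rfl⟩

theorem toLin'_adjMatrix_hammingGraph {K : Type*} [CommRing K] :
    ((hammingGraph ι α).adjMatrix K).toLin'
      = ∑ i, sumLetter K i - algebraMap K _ (Fintype.card ι : K) := by
  refine LinearMap.ext fun f => funext fun x => ?_
  have hsum (i : ι) : ∑ a, f (update x i a)
      = ∑ a ∈ Finset.univ.erase (x i), f (update x i a) + f x := by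
    rw [← Finset.sum_erase_add _ _ (Finset.mem_univ (x i)), update_eq_self]
  simp only [Matrix.toLin'_apply, SimpleGraph.adjMatrix_mulVec_apply,
    sum_neighborFinset_hammingGraph, LinearMap.sub_apply, LinearMap.sum_apply, Finset.sum_apply,
    Pi.sub_apply, Pi.smul_apply, Module.algebraMap_end_apply, sumLetter_apply, hsum,
    Finset.sum_add_distrib]
  simp

theorem spectrum_adjMatrix_hammingGraph {K : Type*} [Field K] [Nontrivial α] :
    spectrum K ((hammingGraph ι α).adjMatrix K)
      = (fun j : ℕ => (j * Fintype.card α - Fintype.card ι : K)) '' Set.Iic (Fintype.card ι) := by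
  rw [← Matrix.spectrum_toLin', toLin'_adjMatrix_hammingGraph, ← spectrum.sub_singleton_eq,
    spectrum_sum_sumLetter, Set.sub_singleton, Set.image_image]

end HammingGraph

section LineSum

variable {W : Type*}

/-- The space `ℓ²(ℤ × W)` on which the adjacency operator of a graph sum of the line with a graph on
`W` acts. -/
abbrev LineL2 (W : Type*) : Type _ := lp (fun _ : ℤ × W => ℂ) 2

/-- The restriction of `ξ : ℓ²(ℤ × W)` to the fibre `{m} × W`. -/
def fiber (m : ℤ) : LineL2 W →ₗ[ℂ] W → ℂ where
  toFun ξ x := ξ (m, x)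
  map_add' _ _ := rfl
  map_smul' _ _ := rfl

theorem fiber_apply (m : ℤ) (ξ : LineL2 W) (x : W) : fiber m ξ x = ξ (m, x) := rfl

theorem fiber_single_zero [DecidableEq W] (m : ℤ) (x : W) (c : ℂ) :
    fiber m (lp.single 2 (0, x) c) = if m = 0 then Pi.single x c else 0 := by
  ext y
  split_ifs with hm <;> simp [fiber_apply, lp.single_apply, Pi.single_apply, hm]

theorem ext_fiber {ξ η : LineL2 W} (h : ∀ m, fiber m ξ = fiber m η) : ξ = η :=
  lp.ext (funext fun p => congrFun (h p.1) p.2)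

theorem tendsto_dual_fiber [Finite W] (φ : Module.Dual ℂ (W → ℂ)) (ξ : LineL2 W) :
    Tendsto (fun m => φ (fiber m ξ)) cofinite (𝓝 0) := by
  have hfiber : Tendsto (fun m => fiber m ξ) cofinite (𝓝 0) := tendsto_pi_nhds.2 fun x =>
    (tendsto_lp_cofinite_zero (by norm_num) ξ).comp (Prod.mk_left_injective x).tendsto_cofinite
  exact map_zero φ ▸ (φ.continuous_of_finiteDimensional.tendsto 0).comp hfiber

/-- The translation of `ℓ²(ℤ × W)` by one step along the line `ℤ`. -/
noncomputable def lineShift (W : Type*) : LineL2 W ≃ₗᵢ[ℂ] LineL2 W :=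
  lpReindex ℂ ℂ 2 ((Equiv.addRight 1).prodCongr (Equiv.refl W))

/-- The adjacency operator of the line, acting on the first variable of `ℓ²(ℤ × W)`. -/
noncomputable def lineAdj (W : Type*) : LineL2 W →L[ℂ] LineL2 W :=
  (lineShift W : LineL2 W →L[ℂ] LineL2 W) + star (lineShift W : LineL2 W →L[ℂ] LineL2 W)

theorem fiber_lineAdj (m : ℤ) (ξ : LineL2 W) :
    fiber m (lineAdj W ξ) = fiber (m - 1) ξ + fiber (m + 1) ξ := by
  rw [lineAdj, ContinuousLinearMap.star_eq_adjoint, LinearIsometryEquiv.adjoint_eq_symm, add_comm]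
  rfl

theorem spectrum_lineAdj_subset :
    spectrum ℂ (lineAdj W) ⊆ Complex.ofReal '' Set.Icc (-2) 2 := by
  have hnorm : ‖(lineShift W : LineL2 W →L[ℂ] LineL2 W)‖ ≤ 1 :=
    ContinuousLinearMap.opNorm_le_bound _ zero_le_one fun ξ => by simp
  refine (spectrum_add_star_subset _).trans (Set.image_mono (Set.Icc_subset_Icc ?_ ?_)) <;> linarith

/-- `A` is the operator `L + B` on `ℓ²(ℤ × W)`, where `L` is the adjacency operator of the line and
`B` acts on the second variable. If `B` is the adjacency operator of a graph on `W`, then `A` is the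
one of the graph sum of the line with that graph. -/
def IsLineSum (B : Module.End ℂ (W → ℂ)) (A : LineL2 W →L[ℂ] LineL2 W) : Prop :=
  ∀ ξ m, fiber m (A ξ) = fiber (m - 1) ξ + fiber (m + 1) ξ + B (fiber m ξ)

namespace IsLineSum

variable {B : Module.End ℂ (W → ℂ)} {A : LineL2 W →L[ℂ] LineL2 W}

theorem fiber_sub_lineAdj (h : IsLineSum B A) (m : ℤ) (ξ : LineL2 W) :
    fiber m ((A - lineAdj W) ξ) = B (fiber m ξ) := by
  rw [sub_apply, map_sub, h, fiber_lineAdj, add_sub_cancel_left]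

theorem commute_lineAdj_sub_lineAdj (h : IsLineSum B A) :
    Commute (lineAdj W) (A - lineAdj W) := by
  refine ContinuousLinearMap.ext fun ξ => ext_fiber fun m => ?_
  simp only [mul_apply_eq_comp, fiber_lineAdj, h.fiber_sub_lineAdj, map_add]

theorem aeval_sub_lineAdj_eq_zero (h : IsLineSum B A) {p : ℂ[X]} (hp : aeval B p = 0) :
    aeval (A - lineAdj W) p = 0 := by
  refine ContinuousLinearMap.ext fun ξ => ext_fiber fun m => ?_
  have : IsScalarTower ℂ (LineL2 W →L[ℂ] LineL2 W) (LineL2 W) := ⟨fun _ _ _ => rfl⟩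
  have := map_aeval_smul (a := A - lineAdj W) (b := B) (h.fiber_sub_lineAdj m) p ξ
  rw [hp, zero_smul] at this
  exact this.trans (map_zero _).symm

variable [Finite W]

theorem spectrum_subset (h : IsLineSum B A) :
    spectrum ℂ A ⊆ Complex.ofReal '' Set.Icc (-2) 2 + spectrum ℂ B := by
  have hroots := spectrum_add_subset_of_aeval_eq_zero h.commute_lineAdj_sub_lineAdj
    (IsAlgClosed.splits (minpoly ℂ B)) (minpoly.ne_zero (Algebra.IsIntegral.isIntegral B))
    (h.aeval_sub_lineAdj_eq_zero (minpoly.aeval ℂ B))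
  rw [add_sub_cancel] at hroots
  refine hroots.trans (Set.add_subset_add spectrum_lineAdj_subset fun μ hμ => ?_)
  exact (Module.End.hasEigenvalue_of_isRoot hμ).mem_spectrum

theorem dual_single_eq_zero [DecidableEq W] (h : IsLineSum B A) {t : ℝ} (ht : |t| ≤ 2) {μ : ℂ}
    (hunit : IsUnit (algebraMap ℂ _ (t + μ) - A)) {φ : Module.Dual ℂ (W → ℂ)}
    (hφ : φ ∘ₗ B = μ • φ) (x : W) : φ (Pi.single x 1) = 0 := by
  obtain ⟨ξ, hξ⟩ := (ContinuousLinearMap.isUnit_iff_bijective.1 hunit).2 (lp.single 2 (0, x) 1)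
  refine eq_zero_of_greenFunction_of_tendsto_zero ht (fun m => ?_) (tendsto_dual_fiber φ ξ)
  have hB : φ (B (fiber m ξ)) = μ * φ (fiber m ξ) := LinearMap.congr_fun hφ _
  have hm : φ (fiber m ((algebraMap ℂ _ (t + μ) - A : _ →L[ℂ] _) ξ))
      = (t + μ) * φ (fiber m ξ) - φ (fiber m (A ξ)) := by
    simp [Algebra.algebraMap_eq_smul_one, -map_add]
  rw [hξ, fiber_single_zero, h, map_add, map_add, hB, apply_ite φ, map_zero] at hm
  rw [hm, Complex.real_smul]
  ring

theorem add_mem_spectrum (h : IsLineSum B A) {t : ℝ} (ht : |t| ≤ 2) {μ : ℂ}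
    (hμ : μ ∈ spectrum ℂ B) : t + μ ∈ spectrum ℂ A := by
  classical
  obtain ⟨φ, hφ, heigen⟩ := exists_dual_comp_eq_smul hμ
  refine fun hunit => hφ (LinearMap.pi_ext' fun x => LinearMap.ext_ring ?_)
  simpa using h.dual_single_eq_zero ht hunit heigen x

theorem spectrum_eq (h : IsLineSum B A) :
    spectrum ℂ A = Complex.ofReal '' Set.Icc (-2) 2 + spectrum ℂ B := by
  refine h.spectrum_subset.antisymm ?_
  rintro _ ⟨_, ⟨t, ht, rfl⟩, μ, hμ, rfl⟩
  exact h.add_mem_spectrum (abs_le.2 ht) hμ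

end IsLineSum

end LineSum

theorem pairwise_disjoint_Icc_add_mul {q r : ℝ} (hr : 2 * r < q) (c : ℝ) :
    Pairwise (Disjoint on fun j : ℕ => Set.Icc (c + j * q - r) (c + j * q + r)) := by
  intro i j hij
  simp only [Function.onFun, ← Real.closedBall_eq_Icc]
  refine Metric.closedBall_disjoint_closedBall ?_
  have hone : 1 ≤ dist (i : ℝ) j := Nat.dist_cast_real i j ▸ Nat.pairwise_one_le_dist hij
  calc r + r < q := by linarith
    _ ≤ |q| := le_abs_self q
    _ ≤ dist (i : ℝ) j * |q| := le_mul_of_one_le_left (abs_nonneg q) hone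
    _ = dist (c + i * q) (c + j * q) := by
      rw [dist_add_left, Real.dist_eq, Real.dist_eq, ← sub_mul, abs_mul]

theorem image_ofReal_Icc_sub_add (c r : ℝ) :
    Complex.ofReal '' Set.Icc (c - r) (c + r)
      = Complex.ofReal '' Set.Icc (-r) r + {(c : ℂ)} := by
  have hIcc : Set.Icc (c - r) (c + r) = Set.Icc (-r) r + {c} := by
    rw [Set.add_singleton, Set.image_add_const_Icc, neg_add_eq_sub, add_comm r c]
  rw [hIcc, ← Set.image_singleton (f := Complex.ofReal)]
  exact Set.image_add Complex.ofRealHom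

section HammingLineSum

variable {ι α : Type*} [Fintype ι] [DecidableEq ι] [Fintype α] [DecidableEq α]
  {A : LineL2 (ι → α) →L[ℂ] LineL2 (ι → α)}

theorem isLineSum_hammingGraph_iff :
    IsLineSum ((hammingGraph ι α).adjMatrix ℂ).toLin' A ↔
      ∀ (ξ : LineL2 (ι → α)) (m : ℤ) (x : ι → α),
        A ξ (m, x) = ξ (m - 1, x) + ξ (m + 1, x) +
          ∑ y ∈ Finset.univ.filter fun y => hammingDist x y = 1, ξ (m, y) := by
  simp only [IsLineSum, funext_iff, Pi.add_apply, Matrix.toLin'_apply,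
    SimpleGraph.adjMatrix_mulVec_apply, SimpleGraph.neighborFinset_eq_filter, fiber_apply]
  rfl

theorem spectrum_line_sum_hamming_general [Nontrivial α]
    (hA : IsLineSum ((hammingGraph ι α).adjMatrix ℂ).toLin' A) :
    (spectrum ℂ A =
      ⋃ j ∈ Finset.range (Fintype.card ι + 1), (fun x : ℝ => (x : ℂ)) ''
        Set.Icc (-((Fintype.card ι : ℝ) - j) + j * ((Fintype.card α : ℝ) - 1) - 2)
                (-((Fintype.card ι : ℝ) - j) + j * ((Fintype.card α : ℝ) - 1) + 2)) ∧
    (5 ≤ Fintype.card α → Pairwise (Disjoint on fun j : ℕ =>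
      Set.Icc (-((Fintype.card ι : ℝ) - j) + j * ((Fintype.card α : ℝ) - 1) - 2)
              (-((Fintype.card ι : ℝ) - j) + j * ((Fintype.card α : ℝ) - 1) + 2))) := by
  have hcenter (j : ℕ) : -((Fintype.card ι : ℝ) - j) + j * ((Fintype.card α : ℝ) - 1)
      = -Fintype.card ι + j * Fintype.card α := by ring
  simp only [hcenter]
  refine ⟨?_, fun hα => pairwise_disjoint_Icc_add_mul ?_ _⟩
  · rw [hA.spectrum_eq, Matrix.spectrum_toLin', spectrum_adjMatrix_hammingGraph]
    have hband (j : ℕ) := image_ofReal_Icc_sub_add (-Fintype.card ι + j * Fintype.card α) 2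
    simp only [hband, Set.image_eq_iUnion (fun _ => _ - _), Set.add_iUnion₂, Set.mem_Iic,
      Finset.mem_range, Nat.lt_succ_iff]
    push_cast
    simp only [neg_add_eq_sub]
  · have : (5 : ℝ) ≤ Fintype.card α := by exact_mod_cast hα
    linarith

end HammingLineSum

/-- For `n ≥ 5` and `N ≥ 1`, the spectrum of the adjacency operator of the graph
sum `L + N·K_n` of the bi-infinite line with `N` copies of `K_n` is the union of
the `N+1` pairwise disjoint intervals `[c_j − 2, c_j + 2]`,
where `c_j = −(N−j) + j(n−1)` for `j = 0, …, N`. -/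
theorem spectrum_line_sum_hamming (N n : ℕ) (hN : 1 ≤ N) (hn : 5 ≤ n)
    (A : lp (fun _ : ℤ × (Fin N → Fin n) => ℂ) 2 →L[ℂ]
         lp (fun _ : ℤ × (Fin N → Fin n) => ℂ) 2)
    (hA : ∀ (ξ : lp (fun _ : ℤ × (Fin N → Fin n) => ℂ) 2) (m : ℤ)
        (x : Fin N → Fin n),
      A ξ (m, x) = ξ (m - 1, x) + ξ (m + 1, x) +
        ∑ y ∈ Finset.univ.filter
            (fun y : Fin N → Fin n =>
              (Finset.univ.filter fun i => x i ≠ y i).card = 1),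
          ξ (m, y)) :
    (spectrum ℂ A =
      ⋃ j ∈ Finset.range (N + 1), (fun x : ℝ => (x : ℂ)) ''
        Set.Icc (-((N : ℝ) - j) + j * ((n : ℝ) - 1) - 2)
                (-((N : ℝ) - j) + j * ((n : ℝ) - 1) + 2)) ∧
    ∀ i ∈ Finset.range (N + 1), ∀ j ∈ Finset.range (N + 1), i ≠ j →
      Disjoint
        (Set.Icc (-((N : ℝ) - i) + i * ((n : ℝ) - 1) - 2)
                 (-((N : ℝ) - i) + i * ((n : ℝ) - 1) + 2))
        (Set.Icc (-((N : ℝ) - j) + j * ((n : ℝ) - 1) - 2)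
                 (-((N : ℝ) - j) + j * ((n : ℝ) - 1) + 2)) := by
  have : Nontrivial (Fin n) := Fin.nontrivial_iff_two_le.2 (by lia)
  have h := spectrum_line_sum_hamming_general (isLineSum_hammingGraph_iff.2 hA)
  simp only [Fintype.card_fin] at h
  exact ⟨h.1, fun i _ j _ hij => h.2 hn hij⟩
end

section
/- Let n ≥ 5 and N ≥ 1. The spectrum of the adjacency operator of L + N·K_{n,n} is the disjoint union of 2N+1 intervals of length 4 centered at the points jn for j = −N, …, N. -/
/-!
Let `T` be the bilateral shift plus its inverse and let `M` be the adjacency matrix of a finite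
graph `G`. The adjacency operator of `L + G` is `T + B`, where `B` applies `M` in every fibre and
commutes with `T`. By Cayley–Hamilton `B` is annihilated by the characteristic polynomial of `M`, so
`σ(T + B) ⊆ σ(T) + σ(M)`, and `σ(T) ⊆ [-2, 2]` because the shift is unitary.

Conversely let `μ ∈ σ(M)` with left eigenvector `v` and let `z + z⁻¹ ∈ [-2, 2]` with `|z| = 1`. If
`μ + z + z⁻¹` were in the resolvent set, pairing the resolvent of a point mass with `v` would give a
solution `g : ℤ → ℂ` of `(z + z⁻¹) g(m) = g(m - 1) + g(m + 1)` off `0` that decays at infinity. But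
`g(m + 1) - z g(m)` has constant modulus on each side of `0`, so it vanishes and there is no
source.

For finite graph sums the spectra add, products of eigenvectors being eigenvectors. As
`σ(K_{n,n}) = {-n, 0, n}`, the `N`-fold sum has spectrum `{j n : |j| ≤ N}`.
-/

namespace GraphSum

open Filter Matrix Polynomial Topology
open scoped lp Pointwise

section CommutingElements

variable {K R : Type*} [Field K] [Ring R] [Algebra K R]

open scoped IsMulCommutative in
theorem isUnit_sub_of_isUnit_aeval_sub_aeval {a b : R} (hab : Commute a b) {p : K[X]}
    (hp : IsUnit (aeval a p - aeval b p)) : IsUnit (a - b) := by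
  let S := Algebra.adjoin K {a, b}
  have : IsMulCommutative S := Algebra.isMulCommutative_adjoin K <| by
    simp [hab.eq]
  let a' : S := ⟨a, Algebra.subset_adjoin (by simp)⟩
  let b' : S := ⟨b, Algebra.subset_adjoin (by simp)⟩
  obtain ⟨q, hq⟩ : a' - b' ∣ aeval a' p - aeval b' p := by
    simpa using sub_dvd_eval_sub a' b' (p.map (algebraMap K S))
  have hqR : aeval a p - aeval b p = (a - b) * q := by
    simpa [← Subalgebra.aeval_coe, a', b'] using congrArg Subtype.val hq
  have hcomm : Commute (a - b) q := congrArg Subtype.val (mul_comm (a' - b') q)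
  exact (hcomm.isUnit_mul_iff.1 (hqR ▸ hp)).1

variable [IsAlgClosed K]

theorem spectrum_add_subset_of_aeval_eq_zero {a b : R} (hab : Commute a b) {p : K[X]}
    (hp : p.Monic) (hpb : aeval b p = 0) :
    spectrum K (a + b) ⊆ spectrum K a + {k | p.IsRoot k} := by
  intro l hl
  have hcomm : Commute (algebraMap K R l - a) b :=
    (Algebra.commute_algebraMap_left l b).sub_left hab
  have hnotUnit : ¬IsUnit (aeval (algebraMap K R l - a) p) := fun h =>
    spectrum.notMem_iff.2
      (by simpa only [sub_sub] using
        isUnit_sub_of_isUnit_aeval_sub_aeval hcomm (p := p) (by rwa [hpb, sub_zero])) hl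
  rw [(IsAlgClosed.splits p).eq_prod_roots_of_monic hp] at hnotUnit
  obtain ⟨k, hk, hroot⟩ := spectrum.exists_mem_of_not_isUnit_aeval_prod hnotUnit
  rw [← spectrum.singleton_sub_eq] at hk
  obtain ⟨_, hl', s, hs, rfl⟩ := hk
  obtain rfl := Set.mem_singleton_iff.1 hl'
  exact ⟨s, hs, _, hroot, add_sub_cancel s _⟩

theorem spectrum_sum_subset_of_aeval_eq_zero {ι : Type*} {b : ι → R}
    (hb : Pairwise fun i j => Commute (b i) (b j)) {p : ι → K[X]} (hp : ∀ i, (p i).Monic)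
    (hpb : ∀ i, aeval (b i) (p i) = 0) (s : Finset ι) :
    spectrum K (∑ i ∈ s, b i) ⊆ ∑ i ∈ s, {k | (p i).IsRoot k} := by
  classical
  induction s using Finset.induction_on with
  | empty =>
    cases subsingleton_or_nontrivial R
    · simp [spectrum.of_subsingleton]
    · simp
  | insert i s his ih =>
    have hcomm : Commute (∑ j ∈ s, b j) (b i) := Commute.sum_left _ _ _ fun j hj =>
      hb (ne_of_mem_of_not_mem hj his)
    rw [Finset.sum_insert his, Finset.sum_insert his, add_comm (b i), add_comm {k | _}]
    exact (spectrum_add_subset_of_aeval_eq_zero hcomm (hp i) (hpb i)).trans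
      (Set.add_subset_add_right ih)

end CommutingElements

section MatrixSpectrum

variable {K X : Type*} [Field K] [Fintype X] [DecidableEq X]

theorem mem_spectrum_iff_exists_mulVec {M : Matrix X X K} {k : K} :
    k ∈ spectrum K M ↔ ∃ v, v ≠ 0 ∧ M *ᵥ v = k • v := by
  rw [← Matrix.spectrum_toLin', ← Module.End.hasEigenvalue_iff_mem_spectrum]
  refine ⟨fun h => ?_, fun ⟨v, hv0, hv⟩ => ?_⟩
  · obtain ⟨v, hv⟩ := h.exists_hasEigenvector
    exact ⟨v, hv.2, hv.apply_eq_smul⟩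
  · exact Module.End.hasEigenvalue_of_hasEigenvector
      (Module.End.hasEigenvector_iff.2 ⟨Module.End.mem_eigenspace_iff.2 hv, hv0⟩)

theorem mem_spectrum_iff_exists_vecMul {M : Matrix X X K} {k : K} :
    k ∈ spectrum K M ↔ ∃ v, v ≠ 0 ∧ v ᵥ* M = k • v := by
  rw [mem_spectrum_iff_isRoot_charpoly, ← charpoly_transpose, ← mem_spectrum_iff_isRoot_charpoly,
    mem_spectrum_iff_exists_mulVec]
  simp only [mulVec_transpose]

end MatrixSpectrum

section KroneckerSum

variable {K ι : Type*} {κ : ι → Type*}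

theorem prod_eval_ne_zero [CommMonoidWithZero K] [NoZeroDivisors K] [Nontrivial K] [Fintype ι]
    {v : ∀ i, κ i → K} (hv : ∀ i, v i ≠ 0) :
    (fun x : ∀ i, κ i => ∏ i, v i (x i)) ≠ 0 := by
  choose x hx using fun i => Function.ne_iff.1 (hv i)
  exact Function.ne_iff.2 ⟨x, Finset.prod_ne_zero_iff.2 fun i _ => hx i⟩

variable [DecidableEq ι] [∀ i, Fintype (κ i)] [∀ i, DecidableEq (κ i)]

section CommSemiring

variable [CommSemiring K]

/-- The action of a matrix on the `i`-th coordinate of a function of several variables, i.e.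
`1 ⊗ ⋯ ⊗ M ⊗ ⋯ ⊗ 1` with `M` in position `i`; such operators are the summands of a Kronecker sum. -/
def actOnCoord (i : ι) : Matrix (κ i) (κ i) K →ₐ[K] Module.End K ((∀ i, κ i) → K) :=
  AlgHom.ofLinearMap
    { toFun M :=
        { toFun f x := (M *ᵥ fun a => f (Function.update x i a)) (x i)
          map_add' f g := funext fun x => congrFun (mulVec_add M _ _) _
          map_smul' c f := funext fun x => congrFun (mulVec_smul M c _) _ }
      map_add' M M' := by ext1; funext x; exact congrFun (add_mulVec M M' _) _
      map_smul' c M := by ext1; funext x; exact congrFun (smul_mulVec c M _) _ }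
    (by ext1; funext x; simp)
    (fun M M' => by ext1; funext x; simp [← mulVec_mulVec])

theorem actOnCoord_apply (i : ι) (M : Matrix (κ i) (κ i) K) (f : (∀ i, κ i) → K) (x : ∀ i, κ i) :
    actOnCoord i M f x = (M *ᵥ fun a => f (Function.update x i a)) (x i) := rfl

theorem commute_actOnCoord {i j : ι} (hij : i ≠ j) (M : Matrix (κ i) (κ i) K)
    (M' : Matrix (κ j) (κ j) K) : Commute (actOnCoord i M) (actOnCoord j M') := by
  refine LinearMap.ext fun f => funext fun x => ?_
  simp only [Module.End.mul_apply, actOnCoord_apply, mulVec, dotProduct, Finset.mul_sum,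
    Function.update_of_ne hij, Function.update_of_ne hij.symm]
  rw [Finset.sum_comm]
  simp only [mul_left_comm, Function.update_comm hij]

theorem actOnCoord_prod [Fintype ι] (i : ι) {M : Matrix (κ i) (κ i) K} {v : ∀ i, κ i → K} {k : K}
    (hv : M *ᵥ v i = k • v i) :
    actOnCoord i M (fun x => ∏ j, v j (x j)) = k • fun x => ∏ j, v j (x j) := by
  funext x
  have hprod (a : κ i) : ∏ j, v j (Function.update x i a j) =
      (∏ j ∈ Finset.univ.erase i, v j (x j)) * v i a := by
    rw [← Finset.prod_erase_mul _ _ (Finset.mem_univ i), Function.update_self]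
    congr 1
    exact Finset.prod_congr rfl fun j hj => by
      rw [Function.update_of_ne (Finset.ne_of_mem_erase hj)]
  calc actOnCoord i M (fun x => ∏ j, v j (x j)) x
      = (M *ᵥ (∏ j ∈ Finset.univ.erase i, v j (x j)) • v i) (x i) := by
        simp only [actOnCoord_apply, hprod]; rfl
    _ = k * ((∏ j ∈ Finset.univ.erase i, v j (x j)) * v i (x i)) := by
        simp only [mulVec_smul, hv, Pi.smul_apply, smul_eq_mul, mul_left_comm]
    _ = k * ∏ j, v j (x j) := by rw [Finset.prod_erase_mul _ _ (Finset.mem_univ i)]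

end CommSemiring

theorem spectrum_sum_actOnCoord [Field K] [IsAlgClosed K] [Fintype ι]
    (M : ∀ i, Matrix (κ i) (κ i) K) :
    spectrum K (∑ i, actOnCoord i (M i)) = ∑ i, spectrum K (M i) := by
  refine Set.Subset.antisymm ?_ fun l hl => ?_
  · have hcharpoly (i : ι) : spectrum K (M i) = {k | (M i).charpoly.IsRoot k} :=
      Set.ext fun _ => mem_spectrum_iff_isRoot_charpoly
    simp only [hcharpoly]
    exact spectrum_sum_subset_of_aeval_eq_zero (fun i j hij => commute_actOnCoord hij _ _)
      (fun i => (M i).charpoly_monic)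
      (fun i => by rw [aeval_algHom_apply, aeval_self_charpoly, map_zero]) _
  · obtain ⟨k, hk, rfl⟩ := (Set.mem_fintype_sum _ _).1 hl
    choose v hv0 hv using fun i => mem_spectrum_iff_exists_mulVec.1 (hk i)
    refine (Module.End.hasEigenvalue_of_hasEigenvector (x := fun x => ∏ i, v i (x i))
      (Module.End.hasEigenvector_iff.2 ⟨Module.End.mem_eigenspace_iff.2 ?_, ?_⟩)).mem_spectrum
    · simp only [LinearMap.sum_apply, actOnCoord_prod _ (hv _), Finset.sum_smul]
    · exact prod_eval_ne_zero hv0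

end KroneckerSum

section Graphs

variable {ι : Type*} {V : ι → Type*}

/-- The sum (Cartesian product) of a family of graphs: an edge moves exactly one coordinate, along
an edge of the corresponding graph. -/
def graphSum (G : ∀ i, SimpleGraph (V i)) : SimpleGraph (∀ i, V i) where
  Adj x y := ∃ i, (∀ k, k ≠ i → y k = x k) ∧ (G i).Adj (x i) (y i)
  symm := ⟨fun _ _ ⟨i, hne, hi⟩ => ⟨i, fun k hk => (hne k hk).symm, hi.symm⟩⟩
  loopless := ⟨fun _ ⟨i, _, hi⟩ => (G i).irrefl hi⟩

variable [DecidableEq ι]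

theorem graphSum_adj_iff_exists_update {G : ∀ i, SimpleGraph (V i)} {x y : ∀ i, V i} :
    (graphSum G).Adj x y ↔ ∃ i a, (G i).Adj (x i) a ∧ Function.update x i a = y := by
  constructor
  · rintro ⟨i, hne, hi⟩
    refine ⟨i, y i, hi, Function.update_eq_iff.2 ⟨rfl, fun k hk => (hne k hk).symm⟩⟩
  · rintro ⟨i, a, ha, rfl⟩
    exact ⟨i, fun k hk => Function.update_of_ne hk _ _, by simpa using ha⟩

variable [Fintype ι] [∀ i, Fintype (V i)] (G : ∀ i, SimpleGraph (V i))
  [∀ i, DecidableRel (G i).Adj]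

theorem sum_neighborFinset_graphSum {K : Type*} [AddCommMonoid K] (x : ∀ i, V i)
    [Fintype ((graphSum G).neighborSet x)] (f : (∀ i, V i) → K) :
    ∑ y ∈ (graphSum G).neighborFinset x, f y =
      ∑ i, ∑ a ∈ (G i).neighborFinset (x i), f (Function.update x i a) := by
  rw [Finset.sum_sigma']
  symm
  refine Finset.sum_bij (fun p _ => Function.update x p.1 p.2) ?_ ?_ ?_ fun _ _ => rfl
  · rintro ⟨i, a⟩ ha
    simp only [Finset.mem_sigma, SimpleGraph.mem_neighborFinset] at ha ⊢
    exact graphSum_adj_iff_exists_update.2 ⟨i, a, ha.2, rfl⟩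
  · rintro ⟨i, a⟩ ha ⟨j, b⟩ - hab
    simp only [Finset.mem_sigma, SimpleGraph.mem_neighborFinset] at ha hab
    have hi := congrFun hab i
    obtain rfl | hij := eq_or_ne i j
    · simpa using hi
    · exact absurd (by simpa [hij] using hi) ha.2.ne'
  · intro y hy
    rw [SimpleGraph.mem_neighborFinset, graphSum_adj_iff_exists_update] at hy
    obtain ⟨i, a, ha, rfl⟩ := hy
    exact ⟨⟨i, a⟩, by simpa using ha, rfl⟩

variable [∀ i, DecidableEq (V i)] [DecidableRel (graphSum G).Adj]

theorem toLin'_adjMatrix_graphSum (K : Type*) [CommSemiring K] :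
    ((graphSum G).adjMatrix K).toLin' = ∑ i, actOnCoord i ((G i).adjMatrix K) := by
  refine LinearMap.ext fun f => funext fun x => ?_
  simp only [toLin'_apply, SimpleGraph.adjMatrix_mulVec_apply, sum_neighborFinset_graphSum,
    LinearMap.sum_apply, Finset.sum_apply, actOnCoord_apply]

theorem spectrum_adjMatrix_graphSum (K : Type*) [Field K] [IsAlgClosed K] :
    spectrum K ((graphSum G).adjMatrix K) = ∑ i, spectrum K ((G i).adjMatrix K) := by
  rw [← spectrum_toLin', toLin'_adjMatrix_graphSum, spectrum_sum_actOnCoord]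

end Graphs

section CompleteBipartite

variable {α K : Type*} [Fintype α] [DecidableRel (completeBipartiteGraph α α).Adj]

theorem adjMatrix_completeBipartiteGraph_mulVec [NonAssocSemiring K] (v : α ⊕ α → K) :
    (completeBipartiteGraph α α).adjMatrix K *ᵥ v =
      Sum.elim (fun _ => ∑ b, v (.inr b)) (fun _ => ∑ a, v (.inl a)) := by
  funext x
  cases x <;> simp [mulVec, dotProduct, SimpleGraph.adjMatrix_apply]

theorem eigenvalue_completeBipartiteGraph [CommRing K] [NoZeroDivisors K] {v : α ⊕ α → K} {k : K}
    (hv0 : v ≠ 0) (hv : (completeBipartiteGraph α α).adjMatrix K *ᵥ v = k • v) :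
    k = 0 ∨ k ^ 2 = (Fintype.card α : K) ^ 2 := by
  simp only [adjMatrix_completeBipartiteGraph_mulVec] at hv
  have hinl (a : α) : ∑ b, v (.inr b) = k * v (.inl a) := congrFun hv (.inl a)
  have hinr (b : α) : ∑ a, v (.inl a) = k * v (.inr b) := congrFun hv (.inr b)
  have hsum_inr : Fintype.card α * ∑ b, v (.inr b) = k * ∑ a, v (.inl a) := by
    simp [Finset.mul_sum, ← hinl]
  have hsum_inl : Fintype.card α * ∑ a, v (.inl a) = k * ∑ b, v (.inr b) := by
    simp [Finset.mul_sum, ← hinr]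
  refine or_iff_not_imp_left.2 fun hk => ?_
  obtain ⟨x, hx⟩ := Function.ne_iff.1 hv0
  have hcube : k * v x * (k ^ 2 - (Fintype.card α : K) ^ 2) = 0 := by
    cases x with
    | inl a =>
      rw [← hinl a]
      linear_combination -k * hsum_inl - Fintype.card α * hsum_inr
    | inr b =>
      rw [← hinr b]
      linear_combination -k * hsum_inr - Fintype.card α * hsum_inl
  exact sub_eq_zero.1 ((mul_eq_zero.1 hcube).resolve_left (mul_ne_zero hk hx))

theorem spectrum_adjMatrix_completeBipartiteGraph [Field K] [DecidableEq α] [Nontrivial α] :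
    spectrum K ((completeBipartiteGraph α α).adjMatrix K) =
      {-(Fintype.card α : K), 0, (Fintype.card α : K)} := by
  obtain ⟨a₀, a₁, ha⟩ := exists_pair_ne α
  ext k
  rw [mem_spectrum_iff_exists_mulVec]
  constructor
  · rintro ⟨v, hv0, hv⟩
    have h := eigenvalue_completeBipartiteGraph hv0 hv
    rw [sq_eq_sq_iff_eq_or_eq_neg] at h
    simp only [Set.mem_insert_iff, Set.mem_singleton_iff]
    tauto
  · simp only [adjMatrix_completeBipartiteGraph_mulVec]
    rintro (rfl | rfl | rfl)
    · exact ⟨Sum.elim 1 (-1), Function.ne_iff.2 ⟨.inl a₀, by simp⟩, by ext (a | a) <;> simp⟩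
    · exact ⟨Sum.elim (Pi.single a₀ 1 - Pi.single a₁ 1) 0,
        Function.ne_iff.2 ⟨.inl a₀, by simp [ha]⟩, by ext (a | a) <;> simp⟩
    · exact ⟨1, one_ne_zero, by ext (a | a) <;> simp⟩

end CompleteBipartite

section MultiplesOfTriple

theorem nsmul_Icc {M : Type*} [AddCommMonoid M] [LinearOrder M] [IsOrderedAddMonoid M]
    [AddLeftReflectLE M] [ExistsAddOfLE M] {a b : M} (hab : a ≤ b) (N : ℕ) :
    N • Set.Icc a b = Set.Icc (N • a) (N • b) := by
  induction N with
  | zero => simp only [zero_nsmul, Set.Icc_self, Set.singleton_zero]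
  | succ N ih =>
    simp only [succ_nsmul, ih, Set.Icc_add_Icc (nsmul_le_nsmul_right hab N) hab]

theorem nsmul_neg_zero_self {M : Type*} [AddCommGroup M] (c : M) (N : ℕ) :
    N • ({-c, 0, c} : Set M) = (fun j : ℤ => j • c) '' Set.Icc (-(N : ℤ)) N := by
  have htriple : ({-c, 0, c} : Set M) = zmultiplesHom M c '' Set.Icc (-1) 1 := by
    have hIcc : Set.Icc (-1 : ℤ) 1 = {-1, 0, 1} := by ext; simp; omega
    simp [hIcc, Set.image_insert_eq]
  rw [htriple, ← Set.image_nsmul, nsmul_Icc (by simp)]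
  simp only [nsmul_eq_mul, mul_neg, mul_one]
  rfl

end MultiplesOfTriple

section SquareSummable

theorem tendsto_norm_lp_cofinite_zero {α : Type*} {E : α → Type*} [∀ i, NormedAddCommGroup (E i)]
    {p : ENNReal} [Fact (1 ≤ p)] (hp : p ≠ ⊤) (ξ : lp E p) :
    Tendsto (fun i => ‖ξ i‖) cofinite (𝓝 0) := by
  classical
  have hp0 : 0 < p := zero_lt_one.trans_le Fact.out
  simpa [lp.norm_single hp0] using
    (lp.hasSum_single hp ξ).summable.tendsto_cofinite_zero.norm

/-- The isometric isomorphism of `ℓ²` spaces induced by a bijection of the index types, acting by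
precomposition; the shift is an instance. -/
noncomputable def reindex (𝕜 : Type*) [RCLike 𝕜] {α β : Type*} (e : α ≃ β) :
    ℓ²(β, 𝕜) ≃ₗᵢ[𝕜] ℓ²(α, 𝕜) where
  toFun ξ := ⟨fun a => ξ (e a), memℓp_gen <| e.summable_iff.2 <|
    (lp.memℓp ξ).summable (by norm_num)⟩
  invFun ξ := ⟨fun b => ξ (e.symm b), memℓp_gen <| e.symm.summable_iff.2 <|
    (lp.memℓp ξ).summable (by norm_num)⟩
  map_add' _ _ := rfl
  map_smul' _ _ := rfl
  left_inv ξ := by ext b; exact congrArg ξ (e.apply_symm_apply b)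
  right_inv ξ := by ext a; exact congrArg ξ (e.symm_apply_apply a)
  norm_map' ξ := by
    rw [← sq_eq_sq₀ (norm_nonneg _) (norm_nonneg _), ← Real.rpow_two, ← Real.rpow_two]
    exact (lp.norm_rpow_eq_tsum (p := 2) (by norm_num) _).trans <|
      (e.tsum_eq fun b => ‖ξ b‖ ^ (2 : ENNReal).toReal).trans
        (lp.norm_rpow_eq_tsum (p := 2) (by norm_num) ξ).symm

end SquareSummable

section UnitarySpectrum

theorem spectrum_add_star_subset {E : Type*} [CStarAlgebra E] {u : E} (hu : u ∈ unitary E) :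
    spectrum ℂ (u + star u) ⊆ Complex.ofReal '' Set.Icc (-2) 2 := by
  intro l hl
  cases subsingleton_or_nontrivial E
  · simp [spectrum.of_subsingleton] at hl
  have hl_real : l = l.re := (IsSelfAdjoint.add_star_self u).mem_spectrum_eq_re hl
  have hl_norm : ‖l‖ ≤ 2 := calc
    ‖l‖ ≤ ‖u + star u‖ := spectrum.norm_le_norm_of_mem hl
    _ ≤ ‖u‖ + ‖star u‖ := norm_add_le _ _
    _ = 2 := by rw [norm_star, CStarRing.norm_of_mem_unitary hu, one_add_one_eq_two]
  exact ⟨l.re, abs_le.1 ((Complex.abs_re_le_norm l).trans hl_norm), hl_real.symm⟩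

end UnitarySpectrum

section LineRecurrence

theorem exists_norm_eq_one_add_inv_eq {t : ℝ} (ht : t ∈ Set.Icc (-2) 2) :
    ∃ z : ℂ, ‖z‖ = 1 ∧ z + z⁻¹ = t := by
  refine ⟨Complex.exp (Real.arccos (t / 2) * Complex.I), Complex.norm_exp_ofReal_mul_I _, ?_⟩
  rw [Complex.inv_eq_conj (Complex.norm_exp_ofReal_mul_I _), Complex.add_conj,
    Complex.exp_ofReal_mul_I_re, Real.cos_arccos (by linarith [ht.1]) (by linarith [ht.2]),
    mul_div_cancel₀ t two_ne_zero]

theorem eq_zero_of_norm_succ_eq_of_tendsto {E : Type*} [NormedAddCommGroup E] {f : ℕ → E}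
    (hf : ∀ k, ‖f (k + 1)‖ = ‖f k‖) (hlim : Tendsto f atTop (𝓝 0)) : f 0 = 0 := by
  have hconst (k : ℕ) : ‖f k‖ = ‖f 0‖ := by
    induction k with
    | zero => rfl
    | succ k ih => rw [hf, ih]
  have hlim_norm : Tendsto (fun _ : ℕ => ‖f 0‖) atTop (𝓝 0) := by
    simpa only [hconst, norm_zero] using hlim.norm
  exact norm_eq_zero.1 (tendsto_nhds_unique tendsto_const_nhds hlim_norm)

theorem source_eq_zero_of_tendsto {𝕜 : Type*} [NormedField 𝕜] {z c : 𝕜} (hz : ‖z‖ = 1)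
    {g : ℤ → 𝕜} (hlim : Tendsto g cofinite (𝓝 0))
    (hg : ∀ m, (z + z⁻¹) * g m - (g (m - 1) + g (m + 1)) = Pi.single (M := fun _ => 𝕜) 0 c m) :
    c = 0 := by
  set h : ℤ → 𝕜 := fun m => g (m + 1) - z * g m with h_def
  have hstep (m : ℤ) : h m = z⁻¹ * h (m - 1) - Pi.single (M := fun _ => 𝕜) 0 c m := by
    have hz0 : z ≠ 0 := norm_ne_zero_iff.1 (hz ▸ one_ne_zero)
    simp only [h_def, sub_add_cancel]
    linear_combination -hg m + g (m - 1) * inv_mul_cancel₀ hz0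
  have hnorm {m : ℤ} (hm : m ≠ 0) : ‖h m‖ = ‖h (m - 1)‖ := by
    rw [hstep, Pi.single_eq_of_ne hm, sub_zero, norm_mul, norm_inv, hz, inv_one, one_mul]
  have hlim_h : Tendsto h cofinite (𝓝 0) := by
    simpa using (hlim.comp (add_left_injective 1).tendsto_cofinite).sub (hlim.const_mul z)
  have h_zero : h 0 = 0 :=
    eq_zero_of_norm_succ_eq_of_tendsto (f := fun k : ℕ => h k)
      (fun k => by simpa using hnorm (m := k + 1) (by omega))
      (Nat.cofinite_eq_atTop ▸ hlim_h.comp Nat.cast_injective.tendsto_cofinite)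
  have h_neg_one : h (-1) = 0 := by
    simpa using eq_zero_of_norm_succ_eq_of_tendsto (f := fun k : ℕ => h (-1 - k))
      (fun k => by simpa [sub_sub] using (hnorm (m := -1 - k) (by omega)).symm)
      (Nat.cofinite_eq_atTop ▸ hlim_h.comp
        ((sub_right_injective (b := -1)).comp Nat.cast_injective).tendsto_cofinite)
  simpa [h_zero, h_neg_one] using hstep 0

end LineRecurrence

section LineSum

variable {V : Type*}

/-- The restriction of a square-summable function on `ℤ × V` to the fibre over `m`. Operators on
`ℓ²(ℤ × V)` are described by what they do to fibres, which are vectors for matrices over `V`. -/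
def fiber (m : ℤ) : ℓ²(ℤ × V, ℂ) →ₗ[ℂ] V → ℂ where
  toFun ξ x := ξ (m, x)
  map_add' _ _ := rfl
  map_smul' _ _ := rfl

theorem fiber_apply (m : ℤ) (ξ : ℓ²(ℤ × V, ℂ)) (x : V) : fiber m ξ x = ξ (m, x) := rfl

theorem ext_fiber {ξ η : ℓ²(ℤ × V, ℂ)} (h : ∀ m, fiber m ξ = fiber m η) : ξ = η :=
  lp.ext <| funext fun q => congrFun (h q.1) q.2

theorem fiber_single [DecidableEq V] (x : V) (c : ℂ) (m : ℤ) :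
    fiber m (lp.single 2 (0, x) c) = Pi.single (M := fun _ => V → ℂ) 0 (Pi.single x c) m := by
  ext y
  by_cases hm : m = 0 <;> simp [fiber_apply, Pi.single_apply, hm]

theorem tendsto_fiber (ξ : ℓ²(ℤ × V, ℂ)) :
    Tendsto (fun m => fiber m ξ) cofinite (𝓝 0) :=
  tendsto_pi_nhds.2 fun x => tendsto_zero_iff_norm_tendsto_zero.2 <|
    (tendsto_norm_lp_cofinite_zero ENNReal.ofNat_ne_top ξ).comp
      (Prod.mk_left_injective x).tendsto_cofinite

/-- The bilateral shift along `ℤ` as a unitary element. It sends `ξ` to `(m, x) ↦ ξ (m + 1, x)`, so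
that adding its adjoint gives the adjacency operator of the line. -/
noncomputable def shift : unitary (ℓ²(ℤ × V, ℂ) →L[ℂ] ℓ²(ℤ × V, ℂ)) :=
  Unitary.linearIsometryEquiv.symm <|
    reindex ℂ ((Equiv.addRight (1 : ℤ)).prodCongr (Equiv.refl V))

theorem fiber_shift (ξ : ℓ²(ℤ × V, ℂ)) (m : ℤ) :
    fiber m (shift.1 ξ) = fiber (m + 1) ξ := rfl

theorem fiber_star_shift (ξ : ℓ²(ℤ × V, ℂ)) (m : ℤ) :
    fiber m (star shift.1 ξ) = fiber (m - 1) ξ := by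
  calc fiber m (star shift.1 ξ) = fiber (m - 1) (shift.1 (star shift.1 ξ)) := by
        rw [fiber_shift, sub_add_cancel]
    _ = fiber (m - 1) ξ := by
        rw [← mul_apply_eq_comp, Unitary.mul_star_self_of_mem shift.2,
          one_apply_eq_self]

variable [Fintype V] [DecidableEq V] {M : Matrix V V ℂ} {A B : ℓ²(ℤ × V, ℂ) →L[ℂ] ℓ²(ℤ × V, ℂ)}

theorem fiber_aeval (hB : ∀ ξ m, fiber m (B ξ) = M *ᵥ fiber m ξ) (p : ℂ[X])
    (ξ : ℓ²(ℤ × V, ℂ)) (m : ℤ) : fiber m (aeval B p ξ) = aeval M p *ᵥ fiber m ξ := by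
  induction p using Polynomial.induction_on generalizing ξ with
  | C a => simp [Algebra.algebraMap_eq_smul_one, smul_mulVec]
  | add p q hp hq => simp [hp, hq, add_mulVec]
  | monomial n a ih =>
    simp only [pow_succ, ← mul_assoc, map_mul _ _ X, aeval_X, mul_apply_eq_comp,
      ih, hB, mulVec_mulVec]

/-- `A` is the adjacency operator of the graph sum of the bi-infinite line and a finite graph with
(possibly weighted) adjacency matrix `M`. -/
def IsLineSumOperator (A : ℓ²(ℤ × V, ℂ) →L[ℂ] ℓ²(ℤ × V, ℂ)) (M : Matrix V V ℂ) : Prop :=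
  ∀ ξ m, fiber m (A ξ) = fiber (m - 1) ξ + fiber (m + 1) ξ + M *ᵥ fiber m ξ

theorem IsLineSumOperator.spectrum_subset (hA : IsLineSumOperator A M) :
    spectrum ℂ A ⊆ spectrum ℂ M + Complex.ofReal '' Set.Icc (-2) 2 := by
  let T : ℓ²(ℤ × V, ℂ) →L[ℂ] ℓ²(ℤ × V, ℂ) := shift.1 + star shift.1
  have hT (ξ : ℓ²(ℤ × V, ℂ)) (m : ℤ) : fiber m (T ξ) = fiber (m + 1) ξ + fiber (m - 1) ξ := by
    rw [_root_.add_apply, map_add, fiber_shift, fiber_star_shift]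
  have hB (ξ : ℓ²(ℤ × V, ℂ)) (m : ℤ) : fiber m ((A - T) ξ) = M *ᵥ fiber m ξ := by
    rw [_root_.sub_apply, map_sub, hA, hT]
    abel
  have hcomm : Commute T (A - T) := ContinuousLinearMap.ext fun ξ => ext_fiber fun m => by
    simp only [mul_apply_eq_comp, hT, hB, mulVec_add]
  have hcharpoly : aeval (A - T) M.charpoly = 0 :=
    ContinuousLinearMap.ext fun ξ => ext_fiber fun m => by
      rw [fiber_aeval hB, aeval_self_charpoly, zero_mulVec, _root_.zero_apply, map_zero]
  calc spectrum ℂ A = spectrum ℂ (T + (A - T)) := by rw [add_sub_cancel]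
    _ ⊆ spectrum ℂ T + {μ | M.charpoly.IsRoot μ} :=
      spectrum_add_subset_of_aeval_eq_zero hcomm M.charpoly_monic hcharpoly
    _ = {μ | M.charpoly.IsRoot μ} + spectrum ℂ T := add_comm _ _
    _ ⊆ spectrum ℂ M + Complex.ofReal '' Set.Icc (-2) 2 :=
      Set.add_subset_add (fun _ => mem_spectrum_iff_isRoot_charpoly.2)
        (spectrum_add_star_subset shift.2)

theorem IsLineSumOperator.add_mem_spectrum (hA : IsLineSumOperator A M) {μ : ℂ}
    (hμ : μ ∈ spectrum ℂ M) {t : ℝ} (ht : t ∈ Set.Icc (-2) 2) : μ + t ∈ spectrum ℂ A := by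
  obtain ⟨z, hz, hzt⟩ := exists_norm_eq_one_add_inv_eq ht
  obtain ⟨v, hv0, hv⟩ := mem_spectrum_iff_exists_vecMul.1 hμ
  obtain ⟨x, hx⟩ := Function.ne_iff.1 hv0
  by_contra hl
  obtain ⟨R, hR⟩ := (spectrum.notMem_iff.1 hl).exists_right_inv
  let ξ := R (lp.single 2 (0, x) 1)
  have hξ : (μ + t) • ξ - A ξ = lp.single 2 (0, x) 1 := by
    simpa [Algebra.algebraMap_eq_smul_one] using congr($hR (lp.single 2 (0, x) 1))
  have hgreen (m : ℤ) : (z + z⁻¹) * (v ⬝ᵥ fiber m ξ) -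
      (v ⬝ᵥ fiber (m - 1) ξ + v ⬝ᵥ fiber (m + 1) ξ) = Pi.single (M := fun _ => ℂ) 0 (v x) m := by
    have hfiber := congr(v ⬝ᵥ fiber m $hξ)
    rw [map_sub, map_smul, hA, fiber_single, dotProduct_sub, dotProduct_add, dotProduct_add,
      dotProduct_mulVec, hv, dotProduct_smul, smul_dotProduct, smul_eq_mul, smul_eq_mul] at hfiber
    have hsource : v ⬝ᵥ Pi.single (M := fun _ => V → ℂ) 0 (Pi.single x 1) m =
        Pi.single (M := fun _ => ℂ) 0 (v x) m := by
      rw [Pi.apply_single (fun _ w => v ⬝ᵥ w) (fun _ => dotProduct_zero v), dotProduct_single_one]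
    rw [hzt, ← hsource, ← hfiber]
    ring
  have hlim : Tendsto (fun m => v ⬝ᵥ fiber m ξ) cofinite (𝓝 0) := by
    have hcont : Continuous fun w : V → ℂ => v ⬝ᵥ w := continuous_const.dotProduct continuous_id
    exact (dotProduct_zero v ▸ hcont.tendsto 0).comp (tendsto_fiber ξ)
  exact hx (source_eq_zero_of_tendsto hz hlim hgreen)

theorem IsLineSumOperator.spectrum_eq (hA : IsLineSumOperator A M) :
    spectrum ℂ A = spectrum ℂ M + Complex.ofReal '' Set.Icc (-2) 2 := by
  refine hA.spectrum_subset.antisymm ?_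
  rintro _ ⟨μ, hμ, _, ⟨t, ht, rfl⟩, rfl⟩
  exact hA.add_mem_spectrum hμ ht

end LineSum

section Intervals

theorem image_add_image_ofReal_Icc (c r : ℝ) (s : Finset ℤ) :
    (fun j : ℤ => j • (c : ℂ)) '' s + Complex.ofReal '' Set.Icc (-r) r =
      ⋃ j ∈ s, Complex.ofReal '' Set.Icc (j * c - r) (j * c + r) := by
  rw [← Set.iUnion_add_left_image, Set.biUnion_image]
  refine Set.iUnion₂_congr fun j _ => ?_
  rw [sub_eq_add_neg, ← Set.image_const_add_Icc, Set.image_image, Set.image_image]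
  simp

theorem disjoint_Icc_of_ne {c r : ℝ} (hr : 2 * r < c) {i j : ℤ} (hij : i ≠ j) :
    Disjoint (Set.Icc (i * c - r) (i * c + r)) (Set.Icc (j * c - r) (j * c + r)) := by
  wlog hlt : i < j generalizing i j
  · exact (this hij.symm (lt_of_le_of_ne (not_lt.1 hlt) hij.symm)).symm
  refine Set.disjoint_left.2 fun x ⟨hix, hxi⟩ ⟨hjx, _⟩ => ?_
  have hc : 0 ≤ c := by linarith
  have hstep : (i + 1) * c ≤ j * c := mul_le_mul_of_nonneg_right (by exact_mod_cast hlt) hc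
  linarith

end Intervals

section GraphSpectra

theorem isLineSumOperator_adjMatrix_iff {V : Type*} [Fintype V] {G : SimpleGraph V}
    [DecidableRel G.Adj] {A : ℓ²(ℤ × V, ℂ) →L[ℂ] ℓ²(ℤ × V, ℂ)} :
    IsLineSumOperator A (G.adjMatrix ℂ) ↔ ∀ ξ m x, A ξ (m, x) =
      ξ (m - 1, x) + ξ (m + 1, x) + ∑ y ∈ G.neighborFinset x, ξ (m, y) := by
  simp only [IsLineSumOperator, funext_iff, Pi.add_apply, SimpleGraph.adjMatrix_mulVec_apply,
    fiber_apply]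

theorem completeBipartiteGraph_adj_iff {α β : Type*} {x y : α ⊕ β} :
    (completeBipartiteGraph α β).Adj x y ↔ x.isLeft ≠ y.isLeft := by
  cases x <;> cases y <;> simp

theorem spectrum_adjMatrix_graphSum_completeBipartiteGraph (ι α K : Type*) [Fintype ι]
    [DecidableEq ι] [Fintype α] [DecidableEq α] [Nontrivial α] [Field K] [IsAlgClosed K]
    [DecidableRel (graphSum fun _ : ι => completeBipartiteGraph α α).Adj] :
    spectrum K ((graphSum fun _ : ι => completeBipartiteGraph α α).adjMatrix K) =
      (fun j : ℤ => j • (Fintype.card α : K)) ''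
        Set.Icc (-(Fintype.card ι : ℤ)) (Fintype.card ι) := by
  classical
  simp only [spectrum_adjMatrix_graphSum, spectrum_adjMatrix_completeBipartiteGraph,
    Finset.sum_const, Finset.card_univ, nsmul_neg_zero_self]

theorem neighborFinset_graphSum_completeBipartiteGraph {ι α β : Type*}
    [Fintype (ι → α ⊕ β)] (x : ι → α ⊕ β)
    [Fintype ((graphSum fun _ : ι => completeBipartiteGraph α β).neighborSet x)]
    [DecidablePred fun y : ι → α ⊕ β =>
      ∃ i, (∀ k, k ≠ i → y k = x k) ∧ (x i).isLeft ≠ (y i).isLeft] :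
    (graphSum fun _ : ι => completeBipartiteGraph α β).neighborFinset x = Finset.univ.filter
      fun y : ι → α ⊕ β => ∃ i, (∀ k, k ≠ i → y k = x k) ∧ (x i).isLeft ≠ (y i).isLeft := by
  ext y
  rw [SimpleGraph.mem_neighborFinset, Finset.mem_filter_univ]
  simp only [graphSum, completeBipartiteGraph_adj_iff]

end GraphSpectra

end GraphSum

/-- For `n ≥ 5` and `N ≥ 1`, the spectrum of the adjacency operator of the graph
sum `L + N·K_{n,n}` of the bi-infinite line with `N` copies of the complete
bipartite graph `K_{n,n}` is the union of the `2N+1` pairwise disjoint intervals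
of length `4` centered at the points `j·n` for `j = −N, …, N`. -/
theorem spectrum_line_sum_bipartite (N n : ℕ) (hN : 1 ≤ N) (hn : 5 ≤ n)
    (A : lp (fun _ : ℤ × (Fin N → Fin n ⊕ Fin n) => ℂ) 2 →L[ℂ]
         lp (fun _ : ℤ × (Fin N → Fin n ⊕ Fin n) => ℂ) 2)
    (hA : ∀ (ξ : lp (fun _ : ℤ × (Fin N → Fin n ⊕ Fin n) => ℂ) 2) (m : ℤ)
        (x : Fin N → Fin n ⊕ Fin n),
      A ξ (m, x) = ξ (m - 1, x) + ξ (m + 1, x) +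
        ∑ y ∈ Finset.univ.filter
            (fun y : Fin N → Fin n ⊕ Fin n =>
              ∃ i, (∀ k, k ≠ i → y k = x k) ∧ (x i).isLeft ≠ (y i).isLeft),
          ξ (m, y)) :
    (spectrum ℂ A =
      ⋃ j ∈ Finset.Icc (-(N : ℤ)) (N : ℤ), (fun x : ℝ => (x : ℂ)) ''
        Set.Icc ((j : ℝ) * n - 2) ((j : ℝ) * n + 2)) ∧
    ∀ i ∈ Finset.Icc (-(N : ℤ)) (N : ℤ), ∀ j ∈ Finset.Icc (-(N : ℤ)) (N : ℤ),
      i ≠ j →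
      Disjoint (Set.Icc ((i : ℝ) * n - 2) ((i : ℝ) * n + 2))
               (Set.Icc ((j : ℝ) * n - 2) ((j : ℝ) * n + 2)) := by
  classical
  have : Nontrivial (Fin n) := Fin.nontrivial_iff_two_le.2 (by omega)
  have hgap : (2 * 2 : ℝ) < n := by exact_mod_cast (by omega : 2 * 2 < n)
  refine ⟨?_, fun i _ j _ hij => GraphSum.disjoint_Icc_of_ne hgap hij⟩
  let G := GraphSum.graphSum fun _ : Fin N => completeBipartiteGraph (Fin n) (Fin n)
  have hline : GraphSum.IsLineSumOperator A (G.adjMatrix ℂ) :=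
    GraphSum.isLineSumOperator_adjMatrix_iff.2 fun ξ m x => by
      rw [hA, GraphSum.neighborFinset_graphSum_completeBipartiteGraph]
  rw [hline.spectrum_eq, GraphSum.spectrum_adjMatrix_graphSum_completeBipartiteGraph,
    Fintype.card_fin, Fintype.card_fin]
  simpa only [Finset.coe_Icc, Complex.ofReal_natCast] using
    GraphSum.image_add_image_ofReal_Icc n 2 (Finset.Icc (-(N : ℤ)) N)
end

section
/- For every integer N ≥ 1 there exists a finitely generated group Γ with finite symmetric generating set S (not containing the identity) such that the spectrum of the adjacency operator of the Cayley graph Cay(Γ, S) on ℓ²(Γ) is a disjoint union of exactly N nondegenerate closed intervals. -/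
/-!
For a commutative group `G`, the right translations of `ℓ²(G)` are commuting unitaries, so by
Gelfand duality the operators `∑ s ∈ S, c s • ρ s` have as spectra the values `∑ s ∈ S, c s * χ s`,
where `χ` runs through a set `X` of characters of `G` depending neither on `S` nor on `c`.
Conjugating by the modulation by a character `χ` replaces `c` by `c * χ`; as `X` is not empty, it
may be replaced by the set of all characters. Hence the spectrum of a Cayley graph of `G` is the set
of its character sums, and Cartesian products of graphs turn into Minkowski sums of spectra.

The two-way infinite path contributes `[-2, 2]` and the complete graph on five vertices `{-1, 4}`.
The product of the path with `m` such complete graphs thus has spectrum `[-2, 2] + m • {-1, 4}`,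
that is, `m + 1` intervals of length `4` with left endpoints at distance `5`.
-/

open WeakDual
open scoped Pointwise

universe u

section JointSpectrum

variable {M 𝔸 : Type*}

/-- The character of a monoid `M` obtained by evaluating a character `φ` of a commutative
C⋆-algebra along a unitary representation `π` of `M` in that algebra. -/
noncomputable def pullbackCharacter [Monoid M] [CommCStarAlgebra 𝔸] (π : M →* unitary 𝔸)
    (φ : characterSpace ℂ 𝔸) : M →* Circle where
  toFun g := ⟨φ (π g),
    mem_sphere_zero_iff_norm.2 (CStarRing.norm_of_mem_unitary (Unitary.map_mem φ (π g).2))⟩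
  map_one' := by ext; simp
  map_mul' g h := by
    simp only [map_mul, Submonoid.coe_mul]
    rfl

theorem spectrum_sum_smul_eq_range_pullbackCharacter [Monoid M] [CommCStarAlgebra 𝔸]
    (π : M →* unitary 𝔸) (S : Finset M) (c : M → ℂ) :
    spectrum ℂ (∑ s ∈ S, c s • (π s : 𝔸)) =
      Set.range fun φ => ∑ s ∈ S, c s * pullbackCharacter π φ s := by
  ext z
  rw [CharacterSpace.mem_spectrum_iff_exists, Set.mem_range]
  simp only [map_sum, map_smul, smul_eq_mul]
  rfl

/-- A unitary representation with values in a star subalgebra, with its codomain restricted to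
the unitaries of that subalgebra. -/
def unitaryCodRestrict {R : Type*} [Monoid M] [CommSemiring R] [StarRing R] [Semiring 𝔸]
    [StarRing 𝔸] [Algebra R 𝔸] [StarModule R 𝔸] (π : M →* unitary 𝔸) (𝓑 : StarSubalgebra R 𝔸)
    (h : ∀ g, (π g : 𝔸) ∈ 𝓑) : M →* unitary 𝓑 where
  toFun g := ⟨⟨π g, h g⟩, Unitary.mem_iff.2
    ⟨Subtype.ext (Unitary.coe_star_mul_self _), Subtype.ext (Unitary.coe_mul_star_self _)⟩⟩
  map_one' := by ext; simp
  map_mul' g h := by ext; simp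

theorem isMulCommutative_adjoin_range_unitary (R : Type*) [CommMonoid M] [CommSemiring R]
    [StarRing R] [Semiring 𝔸] [StarRing 𝔸] [Algebra R 𝔸] [StarModule R 𝔸] (π : M →* unitary 𝔸) :
    IsMulCommutative (StarAlgebra.adjoin R (Set.range fun g => (π g : 𝔸))) := by
  have hπ (g h : M) : Commute (π g) (π h) := (Commute.all g h).map π
  apply StarAlgebra.isMulCommutative_adjoin R
  · rintro _ ⟨g, rfl⟩ _ ⟨h, rfl⟩
    exact congrArg Subtype.val (hπ g h)
  · rintro _ ⟨g, rfl⟩ _ ⟨h, rfl⟩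
    exact congrArg Subtype.val (hπ g h).inv_right

theorem exists_spectrum_sum_smul_eq_image [CommMonoid M] [CStarAlgebra 𝔸] (π : M →* unitary 𝔸) :
    ∃ X : Set (M →* Circle), ∀ (S : Finset M) (c : M → ℂ),
      spectrum ℂ (∑ s ∈ S, c s • (π s : 𝔸)) = (fun χ => ∑ s ∈ S, c s * χ s) '' X := by
  let R : Set 𝔸 := Set.range fun g => (π g : 𝔸)
  let 𝓑 : StarSubalgebra ℂ 𝔸 := (StarAlgebra.adjoin ℂ R).topologicalClosure
  have : IsClosed (𝓑 : Set 𝔸) := StarSubalgebra.isClosed_topologicalClosure _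
  have : IsMulCommutative (StarAlgebra.adjoin ℂ R) :=
    isMulCommutative_adjoin_range_unitary ℂ π
  let _ : CommRing 𝓑 := StarSubalgebra.commRingTopologicalClosure _ mul_comm'
  let _ : CommCStarAlgebra 𝓑 := { }
  let ρ : M →* unitary 𝓑 := unitaryCodRestrict π 𝓑 fun g =>
    StarSubalgebra.le_topologicalClosure _ (StarAlgebra.subset_adjoin ℂ R ⟨g, rfl⟩)
  refine ⟨Set.range (pullbackCharacter ρ), fun S c => ?_⟩
  have hcoe : ∑ s ∈ S, c s • (π s : 𝔸) = 𝓑.subtype (∑ s ∈ S, c s • (ρ s : 𝓑)) := by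
    simp only [map_sum, map_smul]
    rfl
  rw [hcoe, ← Set.range_comp]
  exact (StarSubalgebra.spectrum_eq 𝓑).symm.trans
    (spectrum_sum_smul_eq_range_pullbackCharacter ρ S c)

end JointSpectrum

section RegularRepresentation

/-- The Hilbert space `ℓ²(ι)`. -/
noncomputable abbrev EllTwo (ι : Type*) := lp (fun _ : ι => ℂ) 2

variable {ι G : Type*}

instance [Nonempty ι] : Nontrivial (EllTwo ι) := by
  classical
  obtain ⟨i⟩ := ‹Nonempty ι›
  exact ⟨lp.single 2 i (1 : ℂ), 0, fun h => one_ne_zero (α := ℂ) <| by simpa using congr($h i)⟩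

theorem memℓp_circle_mul_comp_perm {ξ : ι → ℂ} (hξ : Memℓp ξ 2) (u : ι → Circle)
    (σ : Equiv.Perm ι) : Memℓp (fun i => (u i : ℂ) * ξ (σ i)) 2 := by
  rw [memℓp_gen_iff (by norm_num)] at hξ ⊢
  simpa only [norm_mul, Circle.norm_coe, one_mul] using! σ.summable_iff.2 hξ

/-- The generalized permutation operator on `ℓ²(ι)` permuting the coordinates by `σ` and multiplying
them by the phases `u`; translations and modulations on a group are both of this form. -/
noncomputable def monomialIsometry (u : ι → Circle) (σ : Equiv.Perm ι) :
    EllTwo ι ≃ₗᵢ[ℂ] EllTwo ι where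
  toFun ξ := ⟨_, memℓp_circle_mul_comp_perm (lp.memℓp ξ) u σ⟩
  invFun ξ := ⟨_, memℓp_circle_mul_comp_perm (lp.memℓp ξ) (fun i => (u (σ.symm i))⁻¹) σ.symm⟩
  map_add' ξ η := by ext i; exact mul_add ..
  map_smul' z ξ := by ext i; exact mul_left_comm ..
  left_inv ξ := by ext i; simp
  right_inv ξ := by ext i; simp
  norm_map' ξ := by
    rw [lp.norm_eq_tsum_rpow (by norm_num), lp.norm_eq_tsum_rpow (by norm_num)]
    congr 1
    rw [← σ.tsum_eq fun i => ‖ξ i‖ ^ _]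
    congr! 3 with i
    exact (norm_mul _ _).trans (by rw [Circle.norm_coe, one_mul])

/-- `monomialIsometry u σ` as a unitary element of the C⋆-algebra of bounded operators. -/
noncomputable def monomialUnitary (u : ι → Circle) (σ : Equiv.Perm ι) :
    unitary (EllTwo ι →L[ℂ] EllTwo ι) :=
  Unitary.linearIsometryEquiv.symm (monomialIsometry u σ)

@[simp]
theorem monomialUnitary_apply (u : ι → Circle) (σ : Equiv.Perm ι) (ξ : EllTwo ι) (i : ι) :
    (monomialUnitary u σ : EllTwo ι →L[ℂ] EllTwo ι) ξ i = u i * ξ (σ i) := rfl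

/-- The right regular representation of a group `G` on `ℓ²(G)`. -/
noncomputable def rightRegular (G : Type*) [Group G] :
    G →* unitary (EllTwo G →L[ℂ] EllTwo G) where
  toFun h := monomialUnitary 1 (Equiv.mulRight h)
  map_one' := by ext ξ g; simp
  map_mul' a b := by ext ξ g; simp [mul_assoc]

@[simp]
theorem rightRegular_apply [Group G] (h : G) (ξ : EllTwo G) (g : G) :
    (rightRegular G h : EllTwo G →L[ℂ] EllTwo G) ξ g = ξ (g * h) := by
  simp [rightRegular]

/-- Pointwise multiplication by a character `χ` of `G`, as a unitary operator on `ℓ²(G)`. -/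
noncomputable def modulation [Monoid G] (χ : G →* Circle) : unitary (EllTwo G →L[ℂ] EllTwo G) :=
  monomialUnitary χ 1

@[simp]
theorem modulation_apply [Monoid G] (χ : G →* Circle) (ξ : EllTwo G) (g : G) :
    (modulation χ : EllTwo G →L[ℂ] EllTwo G) ξ g = χ g * ξ g := rfl

theorem rightRegular_mul_modulation [Group G] (χ : G →* Circle) (h : G) :
    (rightRegular G h * modulation χ : EllTwo G →L[ℂ] EllTwo G) =
      (χ h : ℂ) • (modulation χ * rightRegular G h : EllTwo G →L[ℂ] EllTwo G) := by
  ext ξ g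
  simp only [mul_apply_eq_comp, _root_.smul_apply, lp.coeFn_smul, Pi.smul_apply,
    smul_eq_mul, rightRegular_apply, modulation_apply, map_mul, Circle.coe_mul]
  ring

theorem conj_star_modulation_rightRegular [Group G] (χ : G →* Circle) (h : G) :
    Unitary.conjStarAlgAut ℂ _ (star (modulation χ))
        (rightRegular G h : EllTwo G →L[ℂ] EllTwo G) =
      (χ h : ℂ) • (rightRegular G h : EllTwo G →L[ℂ] EllTwo G) := by
  rw [Unitary.conjStarAlgAut_star_apply, mul_assoc, rightRegular_mul_modulation,
    mul_smul_comm, ← mul_assoc, Unitary.coe_star_mul_self, one_mul]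

/-- The operator `ξ ↦ (g ↦ ∑ s ∈ S, c s * ξ (g * s))` on `ℓ²(G)`, which for `c = 1` is the
adjacency operator of the Cayley graph of `G` with respect to `S`. -/
noncomputable def weightedAdjacency [Group G] (S : Finset G) (c : G → ℂ) :
    EllTwo G →L[ℂ] EllTwo G :=
  ∑ s ∈ S, c s • (rightRegular G s : EllTwo G →L[ℂ] EllTwo G)

theorem eq_weightedAdjacency_one [Group G] {S : Finset G} {A : EllTwo G →L[ℂ] EllTwo G}
    (hA : ∀ (ξ : EllTwo G) (g : G), A ξ g = ∑ s ∈ S, ξ (g * s)) : A = weightedAdjacency S 1 := by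
  ext ξ g
  rw [hA, weightedAdjacency, _root_.sum_apply, lp.coeFn_sum, Finset.sum_apply]
  simp

theorem spectrum_weightedAdjacency_mul_character [Group G] (χ : G →* Circle) (S : Finset G)
    (c : G → ℂ) :
    spectrum ℂ (weightedAdjacency S fun s => c s * χ s) = spectrum ℂ (weightedAdjacency S c) := by
  let α := Unitary.conjStarAlgAut ℂ (EllTwo G →L[ℂ] EllTwo G) (star (modulation χ))
  have hα : weightedAdjacency S (fun s => c s * χ s) = α.toAlgEquiv (weightedAdjacency S c) := by
    simp only [weightedAdjacency, map_sum, map_smul, mul_smul]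
    exact Finset.sum_congr rfl fun s _ =>
      congrArg (c s • ·) (conj_star_modulation_rightRegular χ s).symm
  rw [hα, AlgEquiv.spectrum_eq]

theorem spectrum_weightedAdjacency [CommGroup G] (S : Finset G) (c : G → ℂ) :
    spectrum ℂ (weightedAdjacency S c) =
      Set.range fun χ : G →* Circle => ∑ s ∈ S, c s * χ s := by
  obtain ⟨X, hX⟩ : ∃ X : Set (G →* Circle), ∀ S c,
      spectrum ℂ (weightedAdjacency S c) = (fun χ => ∑ s ∈ S, c s * χ s) '' X :=
    exists_spectrum_sum_smul_eq_image (rightRegular G)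
  obtain ⟨ψ, hψ⟩ : X.Nonempty := by
    rw [← Set.image_nonempty, ← hX S c]
    exact spectrum.nonempty _
  refine Set.Subset.antisymm ((hX S c).trans_subset (Set.image_subset_range _ _)) ?_
  rintro _ ⟨χ, rfl⟩
  rw [← spectrum_weightedAdjacency_mul_character (χ * ψ⁻¹), hX]
  exact ⟨ψ, hψ, by simp [mul_assoc]⟩

end RegularRepresentation

section CharacterSum

/-- The sum of the character `χ` over `S`. For a commutative group these sums are the spectral
values of the Cayley graph of `G` with respect to `S`. -/
noncomputable def characterSum {G : Type*} [Monoid G] (S : Finset G) (χ : G →* Circle) : ℂ :=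
  ∑ s ∈ S, (χ s : ℂ)

theorem spectrum_eq_range_characterSum {G : Type*} [CommGroup G] {S : Finset G}
    {A : EllTwo G →L[ℂ] EllTwo G} (hA : ∀ (ξ : EllTwo G) (g : G), A ξ g = ∑ s ∈ S, ξ (g * s)) :
    spectrum ℂ A = Set.range (characterSum S) := by
  rw [eq_weightedAdjacency_one hA, spectrum_weightedAdjacency]
  simp only [Pi.one_apply, one_mul]
  rfl

/-- A connection set of a group: a finite symmetric generating set without the identity, the data
defining a nontrivial connected Cayley graph without loops. -/
structure IsConnectionSet {G : Type*} [Group G] (S : Finset G) : Prop where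
  nonempty : S.Nonempty
  closure_eq_top : Subgroup.closure (S : Set G) = ⊤
  inv_mem : ∀ s ∈ S, s⁻¹ ∈ S
  one_notMem : 1 ∉ S

/-- The connection set of the Cartesian product of two Cayley graphs: a step moves
in exactly one of the two factors. -/
def boxProdConnectionSet {G H : Type*} [Group G] [Group H] [DecidableEq G] [DecidableEq H]
    (S : Finset G) (T : Finset H) : Finset (G × H) :=
  S ×ˢ {1} ∪ {1} ×ˢ T

variable {G H : Type*} [Group G] [Group H] [DecidableEq G] [DecidableEq H]
  {S : Finset G} {T : Finset H}

theorem IsConnectionSet.boxProd (hS : IsConnectionSet S) (hT : IsConnectionSet T) :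
    IsConnectionSet (boxProdConnectionSet S T) where
  nonempty := (hS.nonempty.product (Finset.singleton_nonempty 1)).inl
  closure_eq_top := by
    have hle : (Subgroup.closure (S : Set G)).prod (Subgroup.closure (T : Set H)) ≤
        Subgroup.closure (boxProdConnectionSet S T : Set (G × H)) := by
      rw [Subgroup.prod_le_iff, MonoidHom.map_closure, MonoidHom.map_closure]
      constructor <;> apply Subgroup.closure_mono <;> rintro _ ⟨s, hs, rfl⟩ <;>
        simp_all [boxProdConnectionSet]
    rwa [hS.closure_eq_top, hT.closure_eq_top, Subgroup.top_prod_top, top_le_iff] at hle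
  inv_mem := by
    rintro ⟨g, h⟩ hgh
    simp only [boxProdConnectionSet, Finset.mem_union, Finset.mem_product, Finset.mem_singleton,
      Prod.inv_mk, inv_eq_one] at hgh ⊢
    exact hgh.imp (.imp_left (hS.inv_mem g)) (.imp_right (hT.inv_mem h))
  one_notMem := by
    simp [boxProdConnectionSet, hS.one_notMem, hT.one_notMem]

theorem characterSum_boxProdConnectionSet (hS : 1 ∉ S) (χ : G × H →* Circle) :
    characterSum (boxProdConnectionSet S T) χ =
      characterSum S (χ.comp (.inl G H)) + characterSum T (χ.comp (.inr G H)) := by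
  have hdisj : Disjoint (S ×ˢ ({1} : Finset H)) ({1} ×ˢ T) := by
    rw [Finset.disjoint_product]
    exact .inl (Finset.disjoint_singleton_right.2 hS)
  rw [characterSum, boxProdConnectionSet, Finset.sum_union hdisj]
  simp [characterSum]

theorem range_characterSum_boxProdConnectionSet (hS : 1 ∉ S) :
    Set.range (characterSum (boxProdConnectionSet S T)) =
      Set.range (characterSum S) + Set.range (characterSum T) := by
  ext z
  simp only [Set.mem_add, Set.mem_range, exists_exists_eq_and]
  constructor
  · rintro ⟨χ, rfl⟩
    exact ⟨_, _, (characterSum_boxProdConnectionSet hS χ).symm⟩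
  · rintro ⟨χ, ψ, rfl⟩
    refine ⟨χ.coprod ψ, ?_⟩
    rw [characterSum_boxProdConnectionSet hS, MonoidHom.coprod_comp_inl, MonoidHom.coprod_comp_inr]

end CharacterSum

theorem exists_isConnectionSet_range_characterSum_eq_add_nsmul {G H : Type u}
    [CommGroup G] [CommGroup H] {S : Finset G} {T : Finset H}
    (hS : IsConnectionSet S) (hT : IsConnectionSet T) (m : ℕ) :
    ∃ (Γ : Type u) (_ : CommGroup Γ) (U : Finset Γ), IsConnectionSet U ∧
      Set.range (characterSum U) = Set.range (characterSum S) + m • Set.range (characterSum T) := by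
  classical
  induction m with
  | zero => exact ⟨G, _, S, hS, by simp⟩
  | succ m ih =>
    obtain ⟨Γ, _, U, hU, hrange⟩ := ih
    refine ⟨Γ × H, inferInstance, boxProdConnectionSet U T, hU.boxProd hT, ?_⟩
    rw [range_characterSum_boxProdConnectionSet hU.one_notMem, hrange, succ_nsmul, add_assoc]

section Int

/-- The connection set `{1, -1}` of `ℤ`, whose Cayley graph is the two-way infinite path. -/
def intConnectionSet : Finset (Multiplicative ℤ) := {.ofAdd 1, .ofAdd (-1)}

theorem isConnectionSet_intConnectionSet : IsConnectionSet intConnectionSet where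
  nonempty := Finset.insert_nonempty _ _
  closure_eq_top := by
    rw [eq_top_iff]
    rintro n -
    rw [← ofAdd_toAdd n, ← mul_one n.toAdd, ← smul_eq_mul, ofAdd_zsmul]
    exact zpow_mem (Subgroup.subset_closure (by simp [intConnectionSet])) _
  inv_mem := by decide
  one_notMem := by decide

theorem range_two_mul_re_circle :
    Set.range (fun z : Circle => 2 * (z : ℂ).re) = Set.Icc (-2) 2 := by
  ext x
  constructor
  · rintro ⟨z, rfl⟩
    have := abs_le.1 (Complex.abs_re_le_norm (z : ℂ))
    rw [Circle.norm_coe] at this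
    constructor <;> linarith
  · rintro ⟨hl, hu⟩
    refine ⟨Circle.exp (Real.arccos (x / 2)), ?_⟩
    simp only [Circle.coe_exp, Complex.exp_ofReal_mul_I_re]
    rw [Real.cos_arccos (by linarith) (by linarith)]
    ring

theorem characterSum_intConnectionSet (χ : Multiplicative ℤ →* Circle) :
    characterSum intConnectionSet χ = ((2 * (χ (.ofAdd 1) : ℂ).re : ℝ) : ℂ) := by
  rw [characterSum, intConnectionSet, Finset.sum_pair (by decide), ofAdd_neg, map_inv,
    Circle.coe_inv_eq_conj, Complex.add_conj]

theorem range_characterSum_intConnectionSet :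
    Set.range (characterSum intConnectionSet) = Complex.ofReal '' Set.Icc (-2) 2 := by
  have hsurj : Function.Surjective fun χ : Multiplicative ℤ →* Circle => χ (.ofAdd 1) :=
    (zpowersHom Circle).symm.surjective
  rw [← range_two_mul_re_circle, ← hsurj.range_comp, ← Set.range_comp]
  exact congrArg Set.range (funext characterSum_intConnectionSet)

end Int

section Finite

theorem exists_character_ne_one (F : Type*) [CommGroup F] [Finite F] [Nontrivial F] :
    ∃ χ : F →* Circle, χ ≠ 1 := by
  obtain ⟨a, ha⟩ := exists_ne (1 : F)
  obtain ⟨ψ, hψ⟩ := AddChar.exists_apply_ne_zero.2 (show Additive.ofMul a ≠ 0 from ha)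
  obtain ⟨φ, rfl⟩ := AddChar.circleEquivComplex.surjective ψ
  refine ⟨φ.toMonoidHom.comp (MulEquiv.multiplicativeAdditive F).symm.toMonoidHom, fun h => hψ ?_⟩
  exact congr((($h a : Circle) : ℂ))

variable {F : Type*} [Group F] [Fintype F] [DecidableEq F]

theorem isConnectionSet_univ_erase_one [Nontrivial F] :
    IsConnectionSet (Finset.univ.erase (1 : F)) where
  nonempty := by
    obtain ⟨a, ha⟩ := exists_ne (1 : F)
    exact ⟨a, by simp [ha]⟩
  closure_eq_top := by
    rw [Finset.coe_erase, Finset.coe_univ, Subgroup.closure_sdiff_one, Subgroup.closure_univ]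
  inv_mem := by simp
  one_notMem := by simp

theorem characterSum_univ_erase_one (χ : F →* Circle) [Decidable (χ = 1)] :
    characterSum (Finset.univ.erase 1) χ = if χ = 1 then -1 + (Fintype.card F : ℂ) else -1 := by
  rw [characterSum, Finset.sum_erase_eq_sub (Finset.mem_univ 1), map_one, Circle.coe_one]
  split_ifs with h
  · simp [h, neg_add_eq_sub]
  · have hne : Circle.coeHom.comp χ ≠ 1 := fun h1 =>
      h (MonoidHom.ext fun g => Circle.coe_injective congr($h1 g))
    have hsum : ∑ g, (χ g : ℂ) = 0 := sum_hom_units_eq_zero _ hne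
    rw [hsum, zero_sub]

theorem range_characterSum_univ_erase_one {F : Type*} [CommGroup F] [Fintype F] [DecidableEq F]
    [Nontrivial F] :
    Set.range (characterSum (Finset.univ.erase (1 : F))) = {-1, -1 + (Fintype.card F : ℂ)} := by
  classical
  obtain ⟨χ, hχ⟩ := exists_character_ne_one F
  refine Set.Subset.antisymm ?_ (Set.pair_subset ⟨χ, ?_⟩ ⟨1, ?_⟩)
  · rintro _ ⟨ψ, rfl⟩
    rw [characterSum_univ_erase_one]
    split_ifs <;> simp
  · rw [characterSum_univ_erase_one, if_neg hχ]
  · rw [characterSum_univ_erase_one, if_pos rfl]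

end Finite

theorem nsmul_pair_self_add {M : Type*} [AddCommMonoid M] (m : ℕ) (d e : M) :
    m • ({d, d + e} : Set M) = (fun k : ℕ => m • d + k • e) '' Set.Iic m := by
  induction m with
  | zero =>
    have hIic : Set.Iic 0 = ({0} : Set ℕ) := by ext k; simp
    simp [hIic, Set.singleton_zero]
  | succ m ih =>
    have hIic : Set.Iic (m + 1) = Set.Iic m ∪ (· + 1) '' Set.Iic m := by
      ext k
      rcases k with - | k <;> simp; omega
    rw [succ_nsmul, ih, Set.insert_eq, Set.add_union, Set.add_singleton, Set.add_singleton, hIic,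
      Set.image_union]
    simp only [Set.image_image]
    congr 1 <;> refine Set.image_congr fun k _ => ?_ <;> simp only [succ_nsmul] <;> abel

theorem Icc_add_nsmul_pair_self_add {M : Type*} [AddCommGroup M] [PartialOrder M]
    [IsOrderedAddMonoid M] (a b d e : M) (m : ℕ) :
    Set.Icc a b + m • ({d, d + e} : Set M) = ⋃ i : Fin (m + 1),
      Set.Icc (a + (m • d + (i : ℕ) • e)) (b + (m • d + (i : ℕ) • e)) := by
  rw [nsmul_pair_self_add, ← Set.iUnion_add_right_image, Set.biUnion_image]
  simp only [Set.image_add_const_Icc]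
  ext x
  simp [Fin.exists_iff]

/-- For every `N ≥ 1` there is a group `Γ` with a finite symmetric generating
set `S` not containing the identity such that the spectrum of the adjacency
operator of `Cay(Γ, S)` on `ℓ²(Γ)` is the disjoint union of exactly `N`
nondegenerate closed intervals. -/
theorem exists_cayley_band_spectrum (N : ℕ) (hN : 1 ≤ N) :
    ∃ (Γ : Type) (_ : Group Γ) (S : Finset Γ),
      S.Nonempty ∧
      (Subgroup.closure (S : Set Γ) = ⊤) ∧
      (∀ s ∈ S, s⁻¹ ∈ S) ∧
      (1 : Γ) ∉ S ∧
      ∀ A : lp (fun _ : Γ => ℂ) 2 →L[ℂ] lp (fun _ : Γ => ℂ) 2,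
        (∀ (ξ : lp (fun _ : Γ => ℂ) 2) (g : Γ), A ξ g = ∑ s ∈ S, ξ (g * s)) →
        ∃ a b : Fin N → ℝ,
          (∀ i, a i < b i) ∧
          (∀ i j : Fin N, i < j → b i < a j) ∧
          spectrum ℂ A =
            ⋃ i : Fin N, (fun x : ℝ => (x : ℂ)) '' Set.Icc (a i) (b i) := by
  have : Fact (1 < 5) := ⟨by norm_num⟩
  obtain ⟨m, rfl⟩ := Nat.exists_eq_add_of_le' hN
  obtain ⟨Γ, _, S, hS, hrange⟩ := exists_isConnectionSet_range_characterSum_eq_add_nsmul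
    isConnectionSet_intConnectionSet
    (isConnectionSet_univ_erase_one (F := Multiplicative (ZMod 5))) m
  refine ⟨Γ, inferInstance, S, hS.nonempty, hS.closure_eq_top, hS.inv_mem, hS.one_notMem,
    fun A hA => ⟨fun i => -2 + (m • -1 + (i : ℕ) • 5), fun i => 2 + (m • -1 + (i : ℕ) • 5),
      fun i => by linarith, fun i j hij => ?_, ?_⟩⟩
  · have : ((i : ℕ) : ℝ) + 1 ≤ (j : ℕ) := by exact_mod_cast hij
    simp only [nsmul_eq_mul]
    linarith
  · have hpair : ({-1, -1 + (Fintype.card (Multiplicative (ZMod 5)) : ℂ)} : Set ℂ) =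
        Complex.ofRealHom '' {-1, -1 + 5} := by
      simp [Set.image_pair]
    rw [spectrum_eq_range_characterSum hA, hrange, range_characterSum_intConnectionSet,
      range_characterSum_univ_erase_one, hpair, ← Set.image_nsmul, ← Set.image_iUnion,
      ← Icc_add_nsmul_pair_self_add]
    exact (Set.image_add Complex.ofRealHom).symm
end
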